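/- Fix η with 0 < η < 1/20. For every sufficiently large prime p, there exist primes p₁, p₂, p₃, p₄ with p^{1/8 + η} < p₁, p₂, p₃, p₄ ≤ 2·p^{1/8 + η} such that p₁·p₂ + p₃·p₄ is a quadratic non-residue modulo p. -/

import Mathlib

/-!
If no sum of two products of primes `p₁ p₂ + p₃ p₄` is a non-residue, then the quadratic character
`χ` equals `1` on `A + A`, where `A` is the set of products `p₁ p₂`; all of these sums lie in
`[1, M]` with `M ≍ p ^ (1/4 + 2η)`. Orthogonality of additive characters and Parseval then give
`|A| ≤ max_z |∑ n ≤ M, χ(n) z ^ n|` over the unit circle. By Chebyshev `|A| ≥ M ^ (1 - o(1))`, so a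
power saving in the twisted sum suffices.

That saving is Burgess's bound, with `M` just above `p ^ (1/4)`. Shift `n` by `a b` with `a` a prime
in `(X, 2X]` and `b ≤ B`: since `χ(n + a b) = χ(a) χ(n / a + b)`, the sum becomes an average of the
short sums `∑ b, χ(u + b) z ^ (a b)`. The twist depends on `a` only through the argument of `z ^ a`,
which pigeonholing pins to a short arc, while coincidences `n / a = n' / a'` modulo `p` are rare
because `2 M X < p` turns them into the equation `n a' = n' a` in integers. Hölder's inequality then
reduces matters to the `2r`-th moment of the short sums over all `u` modulo `p`, which is controlled
by square-root cancellation in `∑ u, χ(f u)` for polynomials `f`, proved by Stepanov's method of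
auxiliary polynomials vanishing to high order.
-/

/-- An integer `x` is a quadratic non-residue modulo the prime `p`. -/
def IsQuadNonRes (p : ℕ) (x : ℤ) : Prop :=
  ¬ ((p : ℤ) ∣ x) ∧ ¬ ∃ y : ℤ, y ^ 2 ≡ x [ZMOD (p : ℤ)]

open Filter Finset Polynomial

section TwistedDerivative

variable {R : Type*} [CommRing R] (f : R[X]) (n : ℕ)

/-- The operator `u ↦ n f' u + f u'`, which describes differentiation on multiples of powers of
`f`: it satisfies `(f ^ n * u)' = f ^ (n - 1) * twistedDerivative f n u`. -/
noncomputable def twistedDerivative : R[X] →ₗ[R] R[X] :=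
  n • LinearMap.mulLeft R (derivative f) + LinearMap.mulLeft R f ∘ₗ derivative

/-- The operator giving `k`-th derivatives of multiples of `f ^ n`, for `k ≤ n`: it satisfies
`(f ^ n * u)⁽ᵏ⁾ = f ^ (n - k) * iterTwistedDerivative f n k u`. -/
noncomputable def iterTwistedDerivative : ℕ → R[X] →ₗ[R] R[X]
  | 0 => LinearMap.id
  | k + 1 => twistedDerivative f (n - k) ∘ₗ iterTwistedDerivative k

lemma twistedDerivative_apply (u : R[X]) :
    twistedDerivative f n u = n * derivative f * u + f * derivative u := by
  simp [twistedDerivative, mul_assoc]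

lemma iterate_derivative_pow_mul_mul {k : ℕ} (hk : k ≤ n) (u : R[X]) {y : R[X]}
    (hy : derivative y = 0) :
    derivative^[k] (f ^ n * u * y) = f ^ (n - k) * iterTwistedDerivative f n k u * y := by
  induction k with
  | zero => simp [iterTwistedDerivative]
  | succ k ih =>
    obtain ⟨e, he⟩ : ∃ e, n - k = e + 1 := ⟨n - k - 1, by lia⟩
    have he' : n - (k + 1) = e := by lia
    rw [Function.iterate_succ_apply', ih (by lia), he, he', iterTwistedDerivative,
      LinearMap.comp_apply, twistedDerivative_apply, he]
    simp only [derivative_mul, derivative_pow_succ, hy, mul_zero, add_zero, Nat.cast_add,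
      Nat.cast_one, map_add, map_natCast, map_one]
    ring

lemma twistedDerivative_mem_degreeLT {e : ℕ} {u : R[X]} (hu : u ∈ degreeLT R e) :
    twistedDerivative f n u ∈ degreeLT R (e + f.natDegree) := by
  rcases eq_or_ne u 0 with rfl | hu₀
  · simp
  have hu : u.natDegree < e := (natDegree_lt_iff_degree_lt hu₀).2 (mem_degreeLT.1 hu)
  have h₁ : (n * derivative f * u).natDegree ≤ f.natDegree + u.natDegree := by
    rw [mul_assoc, ← nsmul_eq_mul]
    refine (natDegree_smul_le _ _).trans (natDegree_mul_le.trans ?_)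
    have := natDegree_derivative_le f
    lia
  have h₂ : (f * derivative u).natDegree ≤ f.natDegree + u.natDegree := by
    have := natDegree_derivative_le u
    exact natDegree_mul_le.trans (by lia)
  rw [twistedDerivative_apply, mem_degreeLT]
  refine degree_le_natDegree.trans_lt ?_
  exact_mod_cast (natDegree_add_le_of_degree_le h₁ h₂).trans_lt (by lia)

lemma iterTwistedDerivative_mem_degreeLT {e : ℕ} {u : R[X]} (hu : u ∈ degreeLT R e) (k : ℕ) :
    iterTwistedDerivative f n k u ∈ degreeLT R (e + k * f.natDegree) := by
  induction k with
  | zero => simpa [iterTwistedDerivative] using hu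
  | succ k ih =>
    simpa [iterTwistedDerivative, add_mul, add_assoc]
      using twistedDerivative_mem_degreeLT f (n - k) ih

end TwistedDerivative

section AuxiliaryPolynomial

variable {K : Type*} [Field K]

lemma finrank_degreeLT (n : ℕ) : Module.finrank K (degreeLT K n) = n := by
  simp [(degreeLTEquiv K n).finrank_eq]

lemma exists_ne_zero_forall_eq_zero_of_mem_degreeLT {V : Type*} [AddCommGroup V] [Module K V]
    {l N : ℕ} (φ : Fin l → V →ₗ[K] K[X]) (hφ : ∀ k v, φ k v ∈ degreeLT K N)
    (hlN : l * N < Module.finrank K V) :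
    ∃ v ≠ 0, ∀ k, φ k v = 0 := by
  have := Module.finite_of_finrank_pos (Nat.zero_lt_of_lt hlN)
  let Φ : V →ₗ[K] Fin l → degreeLT K N := LinearMap.pi fun k ↦ (φ k).codRestrict _ (hφ k)
  have hker : LinearMap.ker Φ ≠ ⊥ := by
    refine LinearMap.ker_ne_bot_of_finrank_lt ?_
    simpa [Module.finrank_pi_fintype, finrank_degreeLT] using hlN
  obtain ⟨v, hv, hv₀⟩ := Submodule.exists_mem_ne_zero_of_ne_bot hker
  exact ⟨v, hv₀, fun k ↦ congrArg Subtype.val (congrFun (LinearMap.mem_ker.1 hv) k)⟩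

lemma mul_X_pow_mem_degreeLT {d i N : ℕ} {u : K[X]} (hu : u ∈ degreeLT K d) (hN : d + i ≤ N) :
    u * X ^ i ∈ degreeLT K N := by
  rw [mem_degreeLT] at hu ⊢
  rw [degree_mul, degree_X_pow]
  calc u.degree + i < d + i := WithBot.add_lt_add_right WithBot.coe_ne_bot hu
    _ ≤ N := mod_cast hN

lemma exists_ne_zero_sum_iterTwistedDerivative_eq_zero (f : K[X]) {l J d : ℕ} (c : ℕ) (a : K)
    (h : l * (d + l * f.natDegree + J) < J * (2 * d)) :
    ∃ w : Fin J → degreeLT K d × degreeLT K d, w ≠ 0 ∧ ∀ k < l,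
      ∑ j, (iterTwistedDerivative f l k (w j).1 +
        a • iterTwistedDerivative f (l + c) k (w j).2) * X ^ (j : ℕ) = 0 := by
  let V := Fin J → degreeLT K d × degreeLT K d
  let φ (k : Fin l) : V →ₗ[K] K[X] := ∑ j : Fin J,
    LinearMap.mulRight K (X ^ (j : ℕ)) ∘ₗ
      (iterTwistedDerivative f l k ∘ₗ (degreeLT K d).subtype ∘ₗ LinearMap.fst K _ _ +
        a • iterTwistedDerivative f (l + c) k ∘ₗ (degreeLT K d).subtype ∘ₗ LinearMap.snd K _ _) ∘ₗ
      LinearMap.proj j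
  have φ_apply (k : Fin l) (w : V) : φ k w = ∑ j, (iterTwistedDerivative f l k (w j).1 +
      a • iterTwistedDerivative f (l + c) k (w j).2) * X ^ (j : ℕ) := by
    simp only [φ, LinearMap.sum_apply]
    rfl
  have hφ (k : Fin l) (w : V) : φ k w ∈ degreeLT K (d + l * f.natDegree + J) := by
    have hmem (n : ℕ) (u : degreeLT K d) :
        iterTwistedDerivative f n k u ∈ degreeLT K (d + l * f.natDegree) :=
      degreeLT_mono (by gcongr; exact k.2.le) (iterTwistedDerivative_mem_degreeLT f n u.2 k)
    rw [φ_apply]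
    exact Submodule.sum_mem _ fun j _ ↦ mul_X_pow_mem_degreeLT
      (add_mem (hmem _ _) (Submodule.smul_mem _ _ (hmem _ _))) (by lia)
  obtain ⟨w, hw₀, hw⟩ := exists_ne_zero_forall_eq_zero_of_mem_degreeLT φ hφ <| by
    simpa [V, Module.finrank_pi_fintype, Module.finrank_prod, finrank_degreeLT, ← two_mul] using h
  exact ⟨w, hw₀, fun k hk ↦ φ_apply ⟨k, hk⟩ w ▸ hw ⟨k, hk⟩⟩

end AuxiliaryPolynomial

/-- Constant multiples of squares of polynomials: the exceptional case of Weil's bound, in which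
`x ↦ f(x)` has essentially constant quadratic character. -/
def IsConstMulSq {R : Type*} [Semiring R] (f : R[X]) : Prop :=
  ∃ (c : R) (g : R[X]), f = C c * g ^ 2

section IsConstMulSq

variable {K : Type*} [Field K] {f : K[X]}

lemma ne_zero_of_not_isConstMulSq (hf : ¬ IsConstMulSq f) : f ≠ 0 := by
  rintro rfl
  exact hf ⟨0, 0, by simp⟩

lemma natDegree_pos_of_not_isConstMulSq (hf : ¬ IsConstMulSq f) : 0 < f.natDegree := by
  by_contra h
  exact hf ⟨f.coeff 0, 1, by rw [one_pow, mul_one, ← eq_C_of_natDegree_eq_zero (by lia)]⟩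

lemma isConstMulSq_of_sq_mul_eq {u v : K[X]} {k : K} (hk : k ≠ 0) (hu : u ≠ 0)
    (h : u ^ 2 * f = C k * v ^ 2) : IsConstMulSq f := by
  have hv : v ^ 2 = u ^ 2 * (C k⁻¹ * f) := by
    rw [mul_left_comm, h, ← mul_assoc, ← C_mul, inv_mul_cancel₀ hk, C_1, one_mul]
  obtain ⟨g, rfl⟩ := (IsIntegrallyClosed.pow_dvd_pow_iff two_ne_zero).1 ⟨_, hv⟩
  exact ⟨k, g, mul_left_cancel₀ (pow_ne_zero 2 hu) (h.trans (by ring))⟩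

lemma eq_zero_and_eq_zero_of_sq_mul_eq (hf : ¬ IsConstMulSq f) {u v : K[X]} {k : K} (hk : k ≠ 0)
    (h : u ^ 2 * f = C k * v ^ 2) : u = 0 ∧ v = 0 := by
  have hu : u = 0 := by_contra fun hu ↦ hf (isConstMulSq_of_sq_mul_eq hk hu h)
  subst hu
  simpa [hk] using h.symm

lemma isConstMulSq_taylor_iff (r : K) : IsConstMulSq (taylor r f) ↔ IsConstMulSq f := by
  have of_taylor {r : K} {f : K[X]} (h : IsConstMulSq f) : IsConstMulSq (taylor r f) := by
    obtain ⟨c, g, rfl⟩ := h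
    exact ⟨c, taylor r g, by simp⟩
  refine ⟨fun h ↦ ?_, of_taylor⟩
  simpa [taylor_taylor] using of_taylor (r := -r) h

lemma even_rootMultiplicity_of_isConstMulSq (hf : IsConstMulSq f) (x : K) :
    Even (f.rootMultiplicity x) := by
  obtain ⟨c, g, rfl⟩ := hf
  rcases eq_or_ne (C c * g ^ 2) 0 with h | h
  · simp [h]
  · have hg : g ^ 2 ≠ 0 := right_ne_zero_of_mul h
    rw [rootMultiplicity_mul h, rootMultiplicity_C, zero_add]
    rw [sq] at hg ⊢
    exact ⟨_, rootMultiplicity_mul hg⟩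

end IsConstMulSq

section Stepanov

variable {p : ℕ} [Fact p.Prime] {f : (ZMod p)[X]} {c d l J : ℕ}

lemma X_pow_dvd_pow_sub_C_eval_zero (f : (ZMod p)[X]) : X ^ p ∣ f ^ p - C (f.eval 0) := by
  rw [← ZMod.pow_card (f.eval 0), C_pow, ← sub_pow_expChar (p := p)]
  exact pow_dvd_pow_of_dvd (X_dvd_iff.2 (by simp [coeff_zero_eq_eval_zero])) p

lemma natDegree_sq_mul_lt {R : Type*} [CommSemiring R] {u g : R[X]} {N : ℕ}
    (hu : u ∈ degreeLT R d) (hN : 0 < N) (h : 2 * d + g.natDegree ≤ N) :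
    (u ^ 2 * g).natDegree < N := by
  rcases eq_or_ne u 0 with rfl | hu₀
  · simpa using hN
  · have hu := (natDegree_lt_iff_degree_lt hu₀).2 (mem_degreeLT.1 hu)
    have h₁ : (u ^ 2 * g).natDegree ≤ 2 * u.natDegree + g.natDegree :=
      natDegree_mul_le.trans (by gcongr; exact natDegree_pow_le)
    lia

/-- The polynomial `∑ (rⱼ + sⱼ fᶜ) X ^ (p j)` of Stepanov's method, where `w j = (rⱼ, sⱼ)`
consists of polynomials of degree less than `d`. -/
noncomputable def stepanovPolynomial (f : (ZMod p)[X]) (c : ℕ)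
    (w : Fin J → degreeLT (ZMod p) d × degreeLT (ZMod p) d) : (ZMod p)[X] :=
  ∑ j, ((w j).1 + (w j).2 * f ^ c : (ZMod p)[X]) * (X ^ p) ^ (j : ℕ)

lemma stepanovPolynomial_succ (f : (ZMod p)[X]) (c : ℕ)
    (w : Fin (J + 1) → degreeLT (ZMod p) d × degreeLT (ZMod p) d) :
    stepanovPolynomial f c w =
      ((w 0).1 + (w 0).2 * f ^ c : (ZMod p)[X]) + X ^ p * stepanovPolynomial f c (Fin.tail w) := by
  simp only [stepanovPolynomial, Fin.sum_univ_succ, Fin.val_zero, pow_zero, mul_one, Fin.tail,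
    Fin.val_succ, pow_succ, mul_comm _ (X ^ p), ← mul_assoc, mul_sum]

-- Modulo `X ^ p`, the polynomial `f ^ p` is the constant `f(0)`, so `(f ^ c) ^ 2 * f` is too.
lemma eq_zero_and_eq_zero_of_X_pow_dvd (hf : ¬ IsConstMulSq f) (hf₀ : f.eval 0 ≠ 0)
    (hc : 2 * c + 1 = p) (hd : 2 * d + f.natDegree ≤ p) {u v : (ZMod p)[X]}
    (hu : u ∈ degreeLT (ZMod p) d) (hv : v ∈ degreeLT (ZMod p) d)
    (h : X ^ p ∣ u + v * f ^ c) : u = 0 ∧ v = 0 := by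
  have hp : 0 < p := (Fact.out : p.Prime).pos
  have hfp : f ^ p = (f ^ c) ^ 2 * f := by rw [← pow_mul, ← pow_succ, mul_comm c, hc]
  have hdvd : X ^ p ∣ u ^ 2 * f - C (f.eval 0) * v ^ 2 := by
    have : u ^ 2 * f - C (f.eval 0) * v ^ 2 =
        (u + v * f ^ c) * ((u - v * f ^ c) * f) + (f ^ p - C (f.eval 0)) * v ^ 2 := by
      rw [hfp]
      ring
    exact this ▸ dvd_add (h.mul_right _) ((X_pow_dvd_pow_sub_C_eval_zero f).mul_right _)
  have hdeg : (u ^ 2 * f - C (f.eval 0) * v ^ 2).natDegree < (X ^ p : (ZMod p)[X]).natDegree := by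
    rw [natDegree_X_pow, mul_comm (C _)]
    exact (natDegree_sub_le _ _).trans_lt (max_lt (natDegree_sq_mul_lt hu hp hd)
      (natDegree_sq_mul_lt hv hp (by rw [natDegree_C]; lia)))
  exact eq_zero_and_eq_zero_of_sq_mul_eq hf hf₀
    (sub_eq_zero.1 (eq_zero_of_dvd_of_natDegree_lt hdvd hdeg))

lemma eq_zero_of_stepanovPolynomial_eq_zero (hf : ¬ IsConstMulSq f) (hf₀ : f.eval 0 ≠ 0)
    (hc : 2 * c + 1 = p) (hd : 2 * d + f.natDegree ≤ p)
    {w : Fin J → degreeLT (ZMod p) d × degreeLT (ZMod p) d} (h : stepanovPolynomial f c w = 0) :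
    w = 0 := by
  induction J with
  | zero => exact Subsingleton.elim _ _
  | succ J ih =>
    rw [stepanovPolynomial_succ] at h
    obtain ⟨h₁, h₂⟩ := eq_zero_and_eq_zero_of_X_pow_dvd hf hf₀ hc hd (w 0).1.2 (w 0).2.2
      ⟨-stepanovPolynomial f c (Fin.tail w), by linear_combination h⟩
    have htail : stepanovPolynomial f c (Fin.tail w) = 0 := by
      simpa [h₁, h₂, X_ne_zero] using h
    have h₀ : w 0 = 0 := Prod.ext (Subtype.ext h₁) (Subtype.ext h₂)
    exact funext (Fin.cases h₀ (congrFun (ih htail)))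

lemma natDegree_stepanovPolynomial_le (f : (ZMod p)[X]) (c : ℕ)
    (w : Fin J → degreeLT (ZMod p) d × degreeLT (ZMod p) d) :
    (stepanovPolynomial f c w).natDegree ≤ d + c * f.natDegree + p * J := by
  have natDegree_le (u : degreeLT (ZMod p) d) : (u : (ZMod p)[X]).natDegree ≤ d :=
    natDegree_le_of_degree_le (mem_degreeLT.1 u.2).le
  refine natDegree_sum_le_of_forall_le _ _ fun j _ ↦ natDegree_mul_le.trans ?_
  gcongr
  · refine (natDegree_add_le _ _).trans (max_le ((natDegree_le _).trans (by lia)) ?_)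
    exact natDegree_mul_le.trans (add_le_add (natDegree_le _) natDegree_pow_le)
  · rw [← pow_mul, natDegree_X_pow]
    gcongr
    exact j.2.le

lemma eval_iterate_derivative_pow_mul_stepanovPolynomial {k : ℕ} (hk : k ≤ l)
    (w : Fin J → degreeLT (ZMod p) d × degreeLT (ZMod p) d) (x : ZMod p) :
    (derivative^[k] (f ^ l * stepanovPolynomial f c w)).eval x = f.eval x ^ (l - k) *
      (∑ j, (iterTwistedDerivative f l k (w j).1 +
        f.eval x ^ c • iterTwistedDerivative f (l + c) k (w j).2) * X ^ (j : ℕ)).eval x := by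
  have hderiv (j : ℕ) : derivative ((X ^ p) ^ j : (ZMod p)[X]) = 0 := by
    simp [← pow_mul, derivative_X_pow]
  have hexp : l + c - k = l - k + c := by lia
  simp only [stepanovPolynomial, mul_sum, iterate_derivative_sum, eval_finsetSum]
  refine sum_congr rfl fun j _ ↦ ?_
  have hsplit (u v y : (ZMod p)[X]) :
      f ^ l * ((u + v * f ^ c) * y) = f ^ l * u * y + f ^ (l + c) * v * y := by
    ring
  rw [hsplit, iterate_map_add, iterate_derivative_pow_mul_mul f l hk _ (hderiv j),
    iterate_derivative_pow_mul_mul f (l + c) (by lia) _ (hderiv j), hexp]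
  simp only [eval_add, eval_mul, eval_pow, eval_X, ZMod.pow_card, eval_smul, smul_eq_mul]
  ring

lemma card_mul_le_natDegree_of_le_rootMultiplicity {R : Type*} [CommRing R] [IsDomain R]
    {P : R[X]} {s : Finset R} (h : ∀ x ∈ s, l ≤ P.rootMultiplicity x) :
    #s * l ≤ P.natDegree := by
  classical
  have hle : l • s.val ≤ P.roots := Multiset.le_iff_count.2 fun x ↦ by
    rw [Multiset.count_nsmul, count_roots]
    by_cases hx : x ∈ s
    · simpa [Multiset.count_eq_one_of_mem s.nodup hx] using h x hx
    · simp [Multiset.count_eq_zero_of_notMem hx]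
  calc #s * l = (l • s.val).card := by rw [Multiset.card_nsmul, mul_comm, card_val]
    _ ≤ P.roots.card := Multiset.card_le_card hle
    _ ≤ P.natDegree := card_roots' P

lemma card_filter_eval_pow_eq_mul_le (hf : ¬ IsConstMulSq f) (hf₀ : f.eval 0 ≠ 0)
    (hc : 2 * c + 1 = p) (hd : 2 * d + f.natDegree ≤ p) (hlp : l ≤ p)
    (h : l * (d + l * f.natDegree + J) < J * (2 * d)) (a : ZMod p) :
    #{x | f.eval x ^ c = a} * l ≤ l * f.natDegree + (d + c * f.natDegree + p * J) := by
  obtain ⟨w, hw₀, hw⟩ := exists_ne_zero_sum_iterTwistedDerivative_eq_zero f c a h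
  set P := f ^ l * stepanovPolynomial f c w
  have hP : P ≠ 0 := mul_ne_zero (pow_ne_zero _ (ne_zero_of_not_isConstMulSq hf))
    (mt (eq_zero_of_stepanovPolynomial_eq_zero hf hf₀ hc hd) hw₀)
  have hroot (x : ZMod p) (hx : f.eval x ^ c = a) : l ≤ P.rootMultiplicity x := by
    rcases Nat.eq_zero_or_pos l with rfl | hl
    · exact Nat.zero_le _
    refine Nat.le_of_pred_lt <|
      (lt_rootMultiplicity_iff_isRoot_iterate_derivative_of_mem_nonZeroDivisors hP ?_).2
        fun k hk ↦ ?_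
    · rw [mem_nonZeroDivisors_iff_ne_zero, Ne, ZMod.natCast_eq_zero_iff,
        (Fact.out : p.Prime).dvd_factorial, not_le]
      exact (Nat.pred_lt hl.ne').trans_le hlp
    · have hkl : k < l := hk.trans_lt (Nat.pred_lt hl.ne')
      rw [IsRoot, eval_iterate_derivative_pow_mul_stepanovPolynomial hkl.le, hx, hw k hkl,
        eval_zero, mul_zero]
  calc _ ≤ P.natDegree :=
        card_mul_le_natDegree_of_le_rootMultiplicity fun x hx ↦ hroot x (mem_filter.1 hx).2
    _ ≤ _ := natDegree_mul_le.trans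
        (add_le_add natDegree_pow_le (natDegree_stepanovPolynomial_le f c w))

end Stepanov

section Weil

variable {p : ℕ} [Fact p.Prime] {f : (ZMod p)[X]}

-- With `t = ⌊√p / 2⌋`, Stepanov's polynomial vanishes to order `2 t` and has `t + 2 deg f + 1`
-- blocks.
lemma card_filter_eval_pow_eq_le {c : ℕ} (hf : ¬ IsConstMulSq f) (hf₀ : f.eval 0 ≠ 0)
    (hc : 2 * c + 1 = p) (hp : 4 * ((f.natDegree : ℝ) + 1) ≤ √p) (a : ZMod p) :
    (#{x | f.eval x ^ c = a} : ℝ) ≤ p / 2 + f.natDegree + 2 * (3 * f.natDegree + 2) * √p := by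
  have hm : (1 : ℝ) ≤ f.natDegree := mod_cast natDegree_pos_of_not_isConstMulSq hf
  set m := f.natDegree
  set q := √(p : ℝ)
  have hq : q * q = p := Real.mul_self_sqrt (by positivity)
  set t := ⌊q / 2⌋₊
  have htq : (t : ℝ) ≤ q / 2 := Nat.floor_le (by positivity)
  have hqt : q / 2 < t + 1 := Nat.lt_floor_add_one _
  have hmp : m ≤ p := by
    have : (m : ℝ) ≤ p := by nlinarith
    exact_mod_cast this
  set d := (p - m) / 2
  have hd : 2 * d + m ≤ p := by lia
  have hpd : (p : ℝ) ≤ 2 * d + m + 1 := by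
    have : p ≤ 2 * d + m + 1 := by lia
    exact_mod_cast this
  have htd : t * t + t < d := by
    have : (t : ℝ) * t + t < d := by nlinarith
    exact_mod_cast this
  have htp : 2 * t ≤ p := by
    have : (2 * t : ℝ) ≤ p := by nlinarith
    exact_mod_cast this
  have hparams : 2 * t * (d + 2 * t * m + (t + 2 * m + 1)) < (t + 2 * m + 1) * (2 * d) := by
    have := Nat.mul_lt_mul_of_pos_left htd (show 0 < 2 * (2 * m + 1) by lia)
    nlinarith
  have hcard : (#{x | f.eval x ^ c = a} * (2 * t) : ℝ) ≤
      2 * t * m + (d + c * m + p * (t + 2 * m + 1)) := by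
    exact_mod_cast card_filter_eval_pow_eq_mul_le hf hf₀ hc hd htp hparams a
  have hd' : (2 * d + m : ℝ) ≤ p := by exact_mod_cast hd
  have hc' : (2 * c + 1 : ℝ) = p := by exact_mod_cast hc
  have hqt' : q * q ≤ 2 * t * 2 * q := by nlinarith
  have hpq : (p : ℝ) * (3 * m + 2) ≤ 2 * t * (2 * (3 * m + 2) * q) := by nlinarith
  refine le_of_mul_le_mul_right (hcard.trans ?_) (by linarith : (0 : ℝ) < 2 * t)
  nlinarith

lemma abs_quadraticChar_le_one {F : Type*} [Field F] [Fintype F] [DecidableEq F] (a : F) :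
    |quadraticChar F a| ≤ 1 := by
  rcases quadraticChar_isQuadratic F a with h | h | h <;> simp [h]

lemma mul_sum_quadraticChar_le {ι F : Type*} [Fintype ι] [Field F] [Fintype F] [DecidableEq F]
    (g : ι → F) {ε : ℤ} (hε : ε = 1 ∨ ε = -1) :
    ε * ∑ i, quadraticChar F (g i) ≤
      2 * #{i | quadraticChar F (g i) = ε} + #{i | g i = 0} - Fintype.card ι := by
  have hterm (a : F) : ε * quadraticChar F a ≤
      2 * (if quadraticChar F a = ε then 1 else 0) + (if a = 0 then 1 else 0) - 1 := by
    simp only [← quadraticChar_eq_zero_iff (F := F)]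
    rcases hε with rfl | rfl <;> rcases quadraticChar_isQuadratic F a with h | h | h <;> simp [h]
  calc ε * ∑ i, quadraticChar F (g i) = ∑ i, ε * quadraticChar F (g i) := mul_sum _ _ _
    _ ≤ ∑ i, (2 * (if quadraticChar F (g i) = ε then 1 else 0) + (if g i = 0 then 1 else 0) - 1) :=
        sum_le_sum fun i _ ↦ hterm (g i)
    _ = _ := by
        simp only [sum_sub_distrib, sum_add_distrib, ← mul_sum, sum_boole, sum_const, card_univ,
          Int.nsmul_eq_mul, mul_one]

lemma card_filter_quadraticChar_eval_eq_le {c : ℕ} (hf : ¬ IsConstMulSq f) (hf₀ : f.eval 0 ≠ 0)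
    (hc : 2 * c + 1 = p) (hp : 4 * ((f.natDegree : ℝ) + 1) ≤ √p) (ε : ℤ) :
    (#{x | quadraticChar (ZMod p) (f.eval x) = ε} : ℝ) ≤
      p / 2 + f.natDegree + 2 * (3 * f.natDegree + 2) * √p := by
  refine le_trans ?_ (card_filter_eval_pow_eq_le hf hf₀ hc hp (ε : ZMod p))
  have hchar : ringChar (ZMod p) ≠ 2 := by
    rw [ZMod.ringChar_zmod_n]
    lia
  have hpow (y : ZMod p) : (quadraticChar (ZMod p) y : ZMod p) = y ^ c := by
    rw [quadraticChar_eq_pow_of_char_ne_two' hchar, ZMod.card]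
    congr
    lia
  gcongr with x
  rintro rfl
  exact (hpow _).symm

lemma card_filter_eval_eq_zero_le {R : Type*} [CommRing R] [IsDomain R] [Fintype R]
    [DecidableEq R] {f : R[X]} (hf : f ≠ 0) : #{x | f.eval x = 0} ≤ f.natDegree := by
  refine le_trans (card_le_card fun x hx ↦ ?_) (f.roots.toFinset_card_le.trans f.card_roots')
  rw [Multiset.mem_toFinset, mem_roots hf]
  exact (mem_filter.1 hx).2

lemma abs_sum_quadraticChar_eval_le_of_eval_zero_ne_zero (hf : ¬ IsConstMulSq f)
    (hf₀ : f.eval 0 ≠ 0) (hp : 4 * ((f.natDegree : ℝ) + 1) ≤ √p) :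
    |((∑ x, quadraticChar (ZMod p) (f.eval x) : ℤ) : ℝ)| ≤ (15 * f.natDegree + 8) * √p := by
  have hm : (1 : ℝ) ≤ f.natDegree := mod_cast natDegree_pos_of_not_isConstMulSq hf
  have hp₂ : p ≠ 2 := by
    rintro rfl
    have : √((2 : ℕ) : ℝ) ≤ 2 := Real.sqrt_le_iff.2 (by norm_num)
    linarith
  obtain ⟨c, hc⟩ := (Fact.out : p.Prime).odd_of_ne_two hp₂
  have hroots : (#{x | f.eval x = 0} : ℝ) ≤ f.natDegree :=
    mod_cast card_filter_eval_eq_zero_le (ne_zero_of_not_isConstMulSq hf)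
  have hle (ε : ℤ) (hε : ε = 1 ∨ ε = -1) :
      (ε : ℝ) * (∑ x, quadraticChar (ZMod p) (f.eval x) : ℤ) ≤ (15 * f.natDegree + 8) * √p := by
    have hsum : (ε : ℝ) * (∑ x, quadraticChar (ZMod p) (f.eval x) : ℤ) ≤
        2 * #{x | quadraticChar (ZMod p) (f.eval x) = ε} + #{x | f.eval x = 0} - p := by
      exact_mod_cast ZMod.card p ▸ mul_sum_quadraticChar_le (fun x ↦ f.eval x) hε
    nlinarith [card_filter_quadraticChar_eval_eq_le hf hf₀ hc.symm hp ε]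
  rw [abs_le]
  constructor
  · simpa [neg_le] using hle (-1) (Or.inr rfl)
  · simpa using hle 1 (Or.inl rfl)

theorem abs_sum_quadraticChar_eval_le (hf : ¬ IsConstMulSq f) :
    |((∑ x, quadraticChar (ZMod p) (f.eval x) : ℤ) : ℝ)| ≤ (15 * f.natDegree + 8) * √p := by
  rcases le_or_gt (4 * ((f.natDegree : ℝ) + 1)) (√p) with hp | hp
  · obtain ⟨r, hr⟩ : ∃ r, f.eval r ≠ 0 := by
      refine f.exists_eval_ne_zero_of_natDegree_lt_card (ne_zero_of_not_isConstMulSq hf) ?_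
      have : (f.natDegree : ℝ) < p := by nlinarith [Real.mul_self_sqrt (Nat.cast_nonneg (α := ℝ) p)]
      rw [Cardinal.mk_fintype, ZMod.card]
      exact_mod_cast this
    have hsum : ∑ x, quadraticChar (ZMod p) (f.eval x) =
        ∑ x, quadraticChar (ZMod p) ((taylor r f).eval x) := by
      simp only [taylor_eval]
      exact (Equiv.sum_comp (Equiv.addRight r) fun x ↦ quadraticChar (ZMod p) (f.eval x)).symm
    rw [hsum, ← natDegree_taylor f r]
    exact abs_sum_quadraticChar_eval_le_of_eval_zero_ne_zero (mt (isConstMulSq_taylor_iff r).1 hf)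
      (by simpa [taylor_eval] using hr) (by simpa using hp)
  · have htriv : |((∑ x, quadraticChar (ZMod p) (f.eval x) : ℤ) : ℝ)| ≤ p := by
      have : |∑ x, quadraticChar (ZMod p) (f.eval x)| ≤ p := by
        simpa [ZMod.card] using (abs_sum_le_sum_abs _ _).trans
          (sum_le_card_nsmul univ _ 1 fun x _ ↦ abs_quadraticChar_le_one (f.eval x))
      exact_mod_cast this
    nlinarith [Real.mul_self_sqrt (Nat.cast_nonneg (α := ℝ) p), Real.sqrt_nonneg (p : ℝ)]

lemma rootMultiplicity_prod_X_add_C {ι K : Type*} [Fintype ι] [Field K] [DecidableEq K]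
    (w : ι → K) (x : K) : (∏ i, (X + C (w i))).rootMultiplicity (-x) = #{i | w i = x} := by
  have hroots : (∏ i, (X + C (w i))).roots = univ.val.map fun i ↦ -w i := by
    simpa using roots_multiset_prod_X_sub_C (univ.val.map fun i ↦ -w i)
  rw [← count_roots, hroots, Multiset.count_map]
  simp [eq_comm, card_def]

theorem abs_sum_quadraticChar_prod_add_le {ι : Type*} [Fintype ι] (w : ι → ZMod p) {b : ZMod p}
    (hb : Odd #{i | w i = b}) :
    |((∑ x, quadraticChar (ZMod p) (∏ i, (x + w i)) : ℤ) : ℝ)| ≤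
      (15 * Fintype.card ι + 8) * √p := by
  have hf : ¬ IsConstMulSq (∏ i, (X + C (w i))) := fun h ↦ by
    have := even_rootMultiplicity_of_isConstMulSq h (-b)
    rw [rootMultiplicity_prod_X_add_C] at this
    exact Nat.not_even_iff_odd.2 hb this
  simpa [eval_prod, natDegree_prod_of_monic, monic_X_add_C] using abs_sum_quadraticChar_eval_le hf

end Weil

section DyadicPrimes

/-- The primes of the dyadic interval `(n, 2 n]`. -/
def dyadicPrimes (n : ℕ) : Finset ℕ := {q ∈ Ioc n (2 * n) | q.Prime}

lemma mem_dyadicPrimes {n q : ℕ} : q ∈ dyadicPrimes n ↔ (n < q ∧ q ≤ 2 * n) ∧ q.Prime := by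
  simp [dyadicPrimes]

lemma pow_factorization_centralBinom_le {n : ℕ} (hn : 2 < n) (q : ℕ) :
    q ^ n.centralBinom.factorization q ≤
      (if q ∈ Icc 1 (2 * n).sqrt then 2 * n else 1) *
        (if q ∈ {q ∈ range (2 * n / 3 + 1) | q.Prime} then q else 1) *
        (if q ∈ dyadicPrimes n then 2 * n else 1) := by
  have hle : q ^ n.centralBinom.factorization q ≤ 2 * n :=
    Nat.pow_factorization_choose_le (by lia)
  have h₁ : 1 ≤ if q ∈ Icc 1 (2 * n).sqrt then 2 * n else 1 := by split_ifs <;> lia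
  have h₂ : 1 ≤ if q ∈ {q ∈ range (2 * n / 3 + 1) | q.Prime} then q else 1 := by
    split_ifs with h
    exacts [(mem_filter.1 h).2.one_le, le_rfl]
  have h₃ : 1 ≤ if q ∈ dyadicPrimes n then 2 * n else 1 := by split_ifs <;> lia
  rcases eq_or_ne (n.centralBinom.factorization q) 0 with hv | hv
  · rw [hv, pow_zero]
    exact one_le_mul (one_le_mul h₁ h₂) h₃
  have hq : q.Prime := by_contra fun h ↦ hv (Nat.factorization_eq_zero_of_not_prime _ h)
  rcases le_or_gt q (2 * n).sqrt with hsqrt | hsqrt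
  · rw [if_pos (mem_Icc.2 ⟨hq.one_le, hsqrt⟩)]
    exact hle.trans ((Nat.le_mul_of_pos_right _ h₂).trans (Nat.le_mul_of_pos_right _ h₃))
  rcases le_or_gt q (2 * n / 3) with hthird | hthird
  · rw [if_pos (mem_filter.2 ⟨mem_range.2 (by lia), hq⟩)]
    calc q ^ n.centralBinom.factorization q ≤ q ^ 1 := Nat.pow_le_pow_right hq.one_le
          (Nat.factorization_choose_le_one (Nat.sqrt_lt'.1 hsqrt))
      _ = q := pow_one q
      _ ≤ _ := (Nat.le_mul_of_pos_left _ h₁).trans (Nat.le_mul_of_pos_right _ h₃)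
  · have hnq : n < q := by
      by_contra! hqn
      exact hv (Nat.factorization_centralBinom_of_two_mul_self_lt_three_mul hn hqn (by lia))
    have hq2n := Nat.le_two_mul_of_factorization_centralBinom_pos (Nat.pos_of_ne_zero hv)
    rw [if_pos (mem_dyadicPrimes.2 ⟨⟨hnq, hq2n⟩, hq⟩)]
    exact hle.trans (Nat.le_mul_of_pos_left _ (one_le_mul h₁ h₂))

lemma centralBinom_le_mul_pow_card_dyadicPrimes {n : ℕ} (hn : 2 < n) :
    n.centralBinom ≤
      (2 * n) ^ (2 * n).sqrt * 4 ^ (2 * n / 3) * (2 * n) ^ #(dyadicPrimes n) := by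
  have prod_eq (s : Finset ℕ) (hs : ∀ q ∈ s, q ≤ 2 * n) (g : ℕ → ℕ) :
      ∏ q ∈ range (2 * n + 1), (if q ∈ s then g q else 1) = ∏ q ∈ s, g q := by
    rw [prod_ite_mem, inter_eq_right.2 fun q hq ↦ mem_range.2 (Nat.lt_succ_of_le (hs q hq))]
  calc n.centralBinom
      = ∏ q ∈ range (2 * n + 1), q ^ n.centralBinom.factorization q :=
        (Nat.prod_pow_factorization_centralBinom n).symm
    _ ≤ _ := prod_le_prod' fun q _ ↦ pow_factorization_centralBinom_le hn q
    _ = (2 * n) ^ (2 * n).sqrt * primorial (2 * n / 3) * (2 * n) ^ #(dyadicPrimes n) := by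
        rw [prod_mul_distrib, prod_mul_distrib, prod_eq _ _ fun _ ↦ 2 * n, prod_eq _ _ fun q ↦ q,
          prod_eq _ _ fun _ ↦ 2 * n, prod_const, prod_const, Nat.card_Icc, Nat.add_sub_cancel]
        · rfl
        · exact fun q hq ↦ (mem_dyadicPrimes.1 hq).1.2
        · intro q hq
          have := mem_range.1 (mem_filter.1 hq).1
          lia
        · exact fun q hq ↦ (mem_Icc.1 hq).2.trans (Nat.sqrt_le_self _)
    _ ≤ _ := by
        gcongr
        exact primorial_le_four_pow _

lemma div_three_le_card_dyadicPrimes_mul_log {n : ℕ} (hn : 4 ≤ n) :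
    (n : ℝ) / 3 ≤ (#(dyadicPrimes n) + √(2 * n) + 1) * Real.log (2 * n) := by
  have hpow : (4 : ℝ) ^ n ≤
      (2 * n) ^ (1 + (2 * n).sqrt + #(dyadicPrimes n)) * 4 ^ (2 * n / 3) := by
    have : 4 ^ n ≤ (2 * n) ^ (1 + (2 * n).sqrt + #(dyadicPrimes n)) * 4 ^ (2 * n / 3) :=
      calc 4 ^ n ≤ n * n.centralBinom := (Nat.four_pow_lt_mul_centralBinom n hn).le
        _ ≤ 2 * n * ((2 * n) ^ (2 * n).sqrt * 4 ^ (2 * n / 3) * (2 * n) ^ #(dyadicPrimes n)) := by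
            gcongr
            · lia
            · exact centralBinom_le_mul_pow_card_dyadicPrimes (by lia)
        _ = _ := by ring
    exact_mod_cast this
  have hn' : (4 : ℝ) ≤ n := mod_cast hn
  have hlog := Real.log_le_log (by positivity) hpow
  rw [Real.log_mul (by positivity) (by positivity), Real.log_pow, Real.log_pow, Real.log_pow]
    at hlog
  have hdiv : ((2 * n / 3 : ℕ) : ℝ) * Real.log 4 ≤ 2 * n / 3 * Real.log 4 := by
    gcongr
    exact_mod_cast Nat.cast_div_le (α := ℝ) (m := 2 * n) (n := 3)
  have hlog2n : 0 ≤ Real.log (2 * n) := Real.log_nonneg (by linarith)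
  have hsqrt : ((2 * n).sqrt : ℝ) * Real.log (2 * n) ≤ √(2 * n) * Real.log (2 * n) := by
    gcongr
    exact_mod_cast Real.nat_sqrt_le_real_sqrt (a := 2 * n)
  have hlog4 : 1 ≤ Real.log 4 := by
    rw [show (4 : ℝ) = 2 ^ 2 by norm_num, Real.log_pow]
    have := Real.log_two_gt_d9
    push_cast
    linarith
  push_cast at hlog
  nlinarith

lemma eventually_mul_rpow_mul_log_le {β : ℝ} (hβ : β < 1) {C : ℝ} (hC : 0 < C) :
    ∀ᶠ n : ℕ in atTop, C * ((n : ℝ) ^ β * Real.log (2 * n)) ≤ n := by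
  have htop : Tendsto (fun n : ℕ ↦ 2 * (n : ℝ)) atTop atTop :=
    tendsto_natCast_atTop_atTop.const_mul_atTop two_pos
  have hlog := (isLittleO_log_rpow_atTop (sub_pos.2 hβ)).comp_tendsto htop
  filter_upwards [hlog.bound (show 0 < (C * 2 ^ (1 - β))⁻¹ by positivity), eventually_gt_atTop 0]
    with n hn hn₀
  have hn₀ : (0 : ℝ) < n := mod_cast hn₀
  calc C * ((n : ℝ) ^ β * Real.log (2 * n))
      ≤ C * ((n : ℝ) ^ β * ((C * 2 ^ (1 - β))⁻¹ * (2 * n) ^ (1 - β))) := by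
        gcongr
        rw [Function.comp_apply, Function.comp_apply,
          Real.norm_of_nonneg (by positivity : (0 : ℝ) ≤ (2 * n) ^ (1 - β))] at hn
        exact (le_abs_self _).trans hn
    _ = (n : ℝ) ^ β * (n : ℝ) ^ (1 - β) := by
        rw [Real.mul_rpow two_pos.le hn₀.le]
        field_simp
    _ = n := by rw [← Real.rpow_add hn₀, add_sub_cancel, Real.rpow_one]

lemma eventually_rpow_le_card_dyadicPrimes {ε : ℝ} (hε : 0 < ε) :
    ∀ᶠ n : ℕ in atTop, (n : ℝ) ^ (1 - ε) ≤ #(dyadicPrimes n) := by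
  set β := max (1 - ε) (1 / 2)
  have hβ : β < 1 := max_lt (by linarith) (by norm_num)
  filter_upwards [eventually_mul_rpow_mul_log_le hβ (show (0 : ℝ) < 13 by norm_num),
    eventually_ge_atTop 4] with n hn hn₄
  by_contra! hcard
  have hn₁ : (4 : ℝ) ≤ n := mod_cast hn₄
  have hlog : 0 < Real.log (2 * n) := Real.log_pos (by linarith)
  have hεβ : (n : ℝ) ^ (1 - ε) ≤ n ^ β :=
    Real.rpow_le_rpow_of_exponent_le (by linarith) (le_max_left _ _)
  have hsqrt : √(2 * n) + 1 ≤ 3 * n ^ β := by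
    have hnβ : √n ≤ n ^ β := by
      rw [Real.sqrt_eq_rpow]
      exact Real.rpow_le_rpow_of_exponent_le (by linarith) (le_max_right _ _)
    have h2n : √(2 * n) ≤ 2 * √n := Real.sqrt_le_iff.2
      ⟨by positivity, by rw [mul_pow, Real.sq_sqrt (by positivity)]; linarith⟩
    have h1n : 1 ≤ √(n : ℝ) := Real.one_le_sqrt.2 (by linarith)
    linarith
  have hchebyshev := div_three_le_card_dyadicPrimes_mul_log hn₄
  nlinarith [Real.rpow_pos_of_pos (show (0 : ℝ) < n by linarith) β]

end DyadicPrimes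

section Tuples

variable {ι α : Type*} [Fintype ι] [DecidableEq α]

lemma two_mul_card_image_le_of_even {v : ι → α} (hv : ∀ i, Even #{j | v j = v i}) :
    2 * #(univ.image v) ≤ Fintype.card ι := by
  rw [mul_comm, ← smul_eq_mul, ← card_univ,
    card_eq_sum_card_fiberwise (f := v) (t := univ.image v) fun i _ ↦
      mem_image_of_mem v (mem_univ i)]
  refine card_nsmul_le_sum _ _ _ fun a ha ↦ ?_
  obtain ⟨i, -, rfl⟩ := mem_image.1 ha
  exact Nat.le_of_dvd (card_pos.2 ⟨i, by simp⟩) (hv i).two_dvd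

lemma card_filter_card_image_le [DecidableEq ι] [Nonempty ι] (S : Finset α) (r : ℕ) :
    #{v ∈ Fintype.piFinset fun _ : ι ↦ S | #(univ.image v) ≤ r} ≤
      r ^ Fintype.card ι * #S ^ r := by
  let factorizations := (Fintype.piFinset fun _ : Fin r ↦ S) ×ˢ (univ : Finset (ι → Fin r))
  have hcard : #factorizations = r ^ Fintype.card ι * #S ^ r := by
    simp [factorizations, mul_comm]
  rw [← hcard]
  refine card_le_card_of_surjOn (fun q ↦ q.1 ∘ q.2) fun v hv ↦ ?_
  obtain ⟨hvS, hvr⟩ := mem_filter.1 hv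
  rw [Fintype.mem_piFinset] at hvS
  obtain ⟨e⟩ : Nonempty (univ.image v ↪ Fin r) :=
    Function.Embedding.nonempty_of_card_le (by simpa using hvr)
  let σ (i : ι) : Fin r := e ⟨v i, mem_image_of_mem v (mem_univ i)⟩
  let i₀ : ι := Classical.arbitrary ι
  refine ⟨(Function.extend e Subtype.val fun _ ↦ v i₀, σ), ?_, ?_⟩
  · simp only [factorizations, coe_product, Set.mem_prod, mem_coe, Fintype.mem_piFinset, mem_univ,
      and_true]
    intro k
    by_cases hk : ∃ a, e a = k
    · obtain ⟨⟨a, ha⟩, rfl⟩ := hk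
      obtain ⟨i, -, rfl⟩ := mem_image.1 ha
      simpa [e.injective.extend_apply] using hvS i
    · simpa [Function.extend_apply' _ _ _ hk] using hvS i₀
  · ext i
    simp [σ, e.injective.extend_apply]

lemma card_filter_forall_even_le [DecidableEq ι] {r : ℕ} (hr : 0 < r)
    (hι : Fintype.card ι = 2 * r) (S : Finset α) :
    #{v ∈ Fintype.piFinset fun _ : ι ↦ S | ∀ i, Even #{j | v j = v i}} ≤
      r ^ (2 * r) * #S ^ r := by
  have : Nonempty ι := Fintype.card_pos_iff.1 (by lia)
  rw [← hι]
  refine (card_le_card (monotone_filter_right _ fun v _ hv ↦ ?_)).trans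
    (card_filter_card_image_le S r)
  have := two_mul_card_image_le_of_even hv
  lia

end Tuples

section Moment

lemma norm_sum_mul_pow_two_mul {α : Type*} (S : Finset α) (r : ℕ) (c : α → ℂ) (ψ : α → ℝ) :
    ((‖∑ b ∈ S, c b * ψ b‖ ^ (2 * r) : ℝ) : ℂ) =
      ∑ v ∈ Fintype.piFinset fun _ : Fin r ⊕ Fin r ↦ S,
        (∏ i, Sum.elim (fun _ ↦ c) (fun _ ↦ star c) i (v i)) * ((∏ i, ψ (v i) : ℝ) : ℂ) := by
  have hconj : ∑ b ∈ S, star c b * ψ b = (starRingEnd ℂ) (∑ b ∈ S, c b * ψ b) := by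
    simp [map_sum]
  simp only [Complex.ofReal_prod, ← prod_mul_distrib]
  rw [← prod_univ_sum (fun _ ↦ S) fun (i : Fin r ⊕ Fin r) b ↦
    Sum.elim (fun _ ↦ c) (fun _ ↦ star c) i b * (ψ b : ℂ), Fintype.prod_sum_type]
  simp only [Sum.elim_inl, Sum.elim_inr, prod_const, card_univ, Fintype.card_fin, hconj]
  rw [← mul_pow, Complex.mul_conj', pow_mul]
  push_cast
  rfl

lemma sum_norm_sum_mul_pow_le {α β : Type*} [Fintype β] (S : Finset α) (r : ℕ) {c : α → ℂ}
    (hc : ∀ b, ‖c b‖ ≤ 1) (ψ : β → α → ℝ) :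
    ∑ x, ‖∑ b ∈ S, c b * ψ x b‖ ^ (2 * r) ≤
      ∑ v ∈ Fintype.piFinset fun _ : Fin r ⊕ Fin r ↦ S, |∑ x, ∏ i, ψ x (v i)| := by
  have hexpand : ((∑ x, ‖∑ b ∈ S, c b * ψ x b‖ ^ (2 * r) : ℝ) : ℂ) =
      ∑ v ∈ Fintype.piFinset fun _ : Fin r ⊕ Fin r ↦ S,
        (∏ i, Sum.elim (fun _ ↦ c) (fun _ ↦ star c) i (v i)) * ((∑ x, ∏ i, ψ x (v i) : ℝ) : ℂ) := by
    rw [Complex.ofReal_sum]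
    simp only [norm_sum_mul_pow_two_mul, Complex.ofReal_sum, mul_sum]
    exact sum_comm
  rw [← abs_of_nonneg (sum_nonneg fun x _ ↦ pow_nonneg (norm_nonneg (∑ b ∈ S, c b * ψ x b)) _),
    ← Real.norm_eq_abs, ← Complex.norm_real, hexpand]
  refine norm_sum_le_of_le _ fun v _ ↦ ?_
  rw [norm_mul, norm_prod, Complex.norm_real, Real.norm_eq_abs]
  refine mul_le_of_le_one_left (abs_nonneg _) (prod_le_one (fun _ _ ↦ norm_nonneg _) fun i _ ↦ ?_)
  rcases i with i | i <;> simp [hc]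

variable {p : ℕ} [Fact p.Prime]

variable (p) in
/-- The quadratic character modulo `p`, with complex values. -/
noncomputable def quadraticDirichletChar : DirichletCharacter ℂ p :=
  (quadraticChar (ZMod p)).ringHomComp (Int.castRingHom ℂ)

lemma abs_sum_quadraticChar_prod_le {ι : Type*} [Fintype ι] (w : ι → ZMod p) :
    |((∑ x, quadraticChar (ZMod p) (∏ i, (x + w i)) : ℤ) : ℝ)| ≤ p := by
  have : |∑ x, quadraticChar (ZMod p) (∏ i, (x + w i))| ≤ p := by
    simpa [ZMod.card] using (abs_sum_le_sum_abs _ _).trans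
      (sum_le_card_nsmul univ _ 1 fun x _ ↦ abs_quadraticChar_le_one (∏ i, (x + w i)))
  exact_mod_cast this

theorem sum_norm_sum_mul_quadraticDirichletChar_pow_le {α : Type*} {S : Finset α} {t : α → ZMod p}
    (ht : Set.InjOn t S) {r : ℕ} (hr : 0 < r) {c : α → ℂ} (hc : ∀ b, ‖c b‖ ≤ 1) :
    ∑ x, ‖∑ b ∈ S, c b * quadraticDirichletChar p (x + t b)‖ ^ (2 * r) ≤
      r ^ (2 * r) * #S ^ r * p + #S ^ (2 * r) * ((30 * r + 8) * √p) := by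
  classical
  let ψ (x : ZMod p) (b : α) : ℝ := quadraticChar (ZMod p) (x + t b)
  have hψ (x b) : quadraticDirichletChar p (x + t b) = ψ x b := by
    simp [quadraticDirichletChar, ψ]
  have hprod (v : Fin r ⊕ Fin r → α) : ∑ x, ∏ i, ψ x (v i) =
      ((∑ x, quadraticChar (ZMod p) (∏ i, (x + t (v i))) : ℤ) : ℝ) := by
    simp only [ψ, map_prod, Int.cast_sum, Int.cast_prod]
  have hcard : Fintype.card (Fin r ⊕ Fin r) = 2 * r := by simp [two_mul]
  simp only [hψ]
  refine (sum_norm_sum_mul_pow_le S r hc ψ).trans ?_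
  simp only [hprod]
  rw [← sum_filter_add_sum_filter_not _ fun v ↦ ∀ i, Even #{j | v j = v i}]
  refine add_le_add ?_ ?_
  · refine (sum_le_card_nsmul _ _ _ fun v _ ↦
      abs_sum_quadraticChar_prod_le fun i ↦ t (v i)).trans ?_
    rw [nsmul_eq_mul]
    gcongr
    exact_mod_cast card_filter_forall_even_le hr hcard S
  · refine (sum_le_card_nsmul _ _ ((30 * r + 8) * √p) fun v hv ↦ ?_).trans ?_
    · simp only [mem_filter, Fintype.mem_piFinset, not_forall, Nat.not_even_iff_odd] at hv
      obtain ⟨hvS, i, hi⟩ := hv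
      have hodd : Odd #{j | t (v j) = t (v i)} := by
        simpa only [ht.eq_iff (hvS _) (hvS _)] using hi
      refine (abs_sum_quadraticChar_prod_add_le (fun i ↦ t (v i)) hodd).trans_eq ?_
      rw [hcard]
      push_cast
      ring
    · rw [nsmul_eq_mul]
      gcongr
      refine mod_cast (card_filter_le _ _).trans_eq ?_
      simp [hcard, two_mul]

end Moment

section Energy

lemma exists_eq_mul_of_coprime_of_mul_eq_mul {a b m n : ℕ} (ha : 0 < a) (hab : a.Coprime b)
    (h : m * b = n * a) : ∃ k, m = a * k ∧ n = b * k := by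
  obtain ⟨k, rfl⟩ : a ∣ m := hab.dvd_of_dvd_mul_right (h ▸ dvd_mul_left a n)
  exact ⟨k, rfl, Nat.eq_of_mul_eq_mul_right ha (by rw [← h]; ring)⟩

variable {A : Finset ℕ} {X : ℕ}

lemma card_filter_mul_eq_mul_le (hA : A ⊆ dyadicPrimes X) (M : ℕ) :
    #{q ∈ (Icc 1 M ×ˢ A) ×ˢ (Icc 1 M ×ˢ A) | q.1.1 * q.2.2 = q.2.1 * q.1.2} ≤
      2 * (M * #A) := by
  let diagonal := (Icc 1 M ×ˢ A).image fun j ↦ (j, j)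
  let multiples := ((A ×ˢ A) ×ˢ Icc 1 (M / X)).image
    fun t ↦ ((t.1.1 * t.2, t.1.1), (t.1.2 * t.2, t.1.2))
  have hdiagonal : #diagonal ≤ M * #A := card_image_le.trans (by simp)
  have hmultiples : #multiples ≤ M * #A := by
    have hAX : #A ≤ X := (card_le_card (hA.trans (filter_subset _ _))).trans (by simp; lia)
    calc #multiples ≤ #A * #A * (M / X) := card_image_le.trans (by simp)
      _ ≤ #A * (X * (M / X)) := by rw [mul_assoc]; gcongr
      _ ≤ M * #A := by rw [mul_comm M]; gcongr; exact Nat.mul_div_le M X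
  suffices hsub : {q ∈ (Icc 1 M ×ˢ A) ×ˢ (Icc 1 M ×ˢ A) | q.1.1 * q.2.2 = q.2.1 * q.1.2} ⊆
      diagonal ∪ multiples by
    have := (card_le_card hsub).trans (card_union_le _ _)
    lia
  rintro ⟨⟨m, a⟩, ⟨n, b⟩⟩ hq
  simp only [mem_filter, mem_product, mem_Icc] at hq
  obtain ⟨⟨⟨hm, ha⟩, ⟨hn, hb⟩⟩, heq⟩ := hq
  obtain ⟨⟨hXa, haX⟩, ha'⟩ := mem_dyadicPrimes.1 (hA ha)
  obtain ⟨-, hb'⟩ := mem_dyadicPrimes.1 (hA hb)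
  rw [mem_union]
  rcases eq_or_ne a b with rfl | hab
  · obtain rfl : m = n := Nat.eq_of_mul_eq_mul_right ha'.pos heq
    exact Or.inl (mem_image.2 ⟨(m, a), by simp [hm, ha], rfl⟩)
  · obtain ⟨k, rfl, rfl⟩ :=
      exists_eq_mul_of_coprime_of_mul_eq_mul ha'.pos ((Nat.coprime_primes ha' hb').2 hab) heq
    refine Or.inr (mem_image.2 ⟨((a, b), k), ?_, rfl⟩)
    have hk : k ≤ M / X := (Nat.le_div_iff_mul_le (by lia)).2 (by nlinarith)
    have hk₀ : 1 ≤ k := Nat.pos_of_mul_pos_left hm.1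
    simp [ha, hb, hk, hk₀]

lemma natCast_ne_zero_of_mem_dyadicPrimes {p a : ℕ} (hp : 2 * X < p) (ha : a ∈ dyadicPrimes X) :
    (a : ZMod p) ≠ 0 := by
  obtain ⟨⟨-, haX⟩, ha'⟩ := mem_dyadicPrimes.1 ha
  rw [Ne, ZMod.natCast_eq_zero_iff]
  exact Nat.not_dvd_of_pos_of_lt ha'.pos (haX.trans_lt hp)

lemma card_filter_div_eq_div_le {p M : ℕ} [Fact p.Prime] (hA : A ⊆ dyadicPrimes X)
    (hp : M * (2 * X) < p) :
    #{q ∈ (Icc 1 M ×ˢ A) ×ˢ (Icc 1 M ×ˢ A) |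
      (q.1.1 : ZMod p) / q.1.2 = (q.2.1 : ZMod p) / q.2.2} ≤ 2 * (M * #A) := by
  refine (card_le_card fun q hq ↦ ?_).trans (card_filter_mul_eq_mul_le hA M)
  rw [mem_filter] at hq ⊢
  refine ⟨hq.1, ?_⟩
  obtain ⟨⟨m, a⟩, ⟨n, b⟩⟩ := q
  simp only [mem_product, mem_Icc] at hq
  obtain ⟨⟨⟨hm, ha⟩, ⟨hn, hb⟩⟩, heq⟩ := hq
  have hX : 2 * X < p := by nlinarith
  have hne (c : ℕ) (hc : c ∈ A) : (c : ZMod p) ≠ 0 :=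
    natCast_ne_zero_of_mem_dyadicPrimes hX (hA hc)
  have hlt {k c : ℕ} (hk : k ≤ M) (hc : c ∈ A) : k * c < p :=
    (Nat.mul_le_mul hk (mem_dyadicPrimes.1 (hA hc)).1.2).trans_lt hp
  rw [div_eq_div_iff (hne a ha) (hne b hb)] at heq
  exact ((ZMod.natCast_eq_natCast_iff _ _ p).1 (mod_cast heq)).eq_of_lt_of_lt
    (hlt hm.2 hb) (hlt hn.2 ha)

end Energy

section Holder

variable {α β : Type*} [DecidableEq β] (J : Finset α) (φ : α → β)

lemma card_filter_eq_eq_sum_card_fiber_sq :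
    #{q ∈ J ×ˢ J | φ q.1 = φ q.2} = ∑ x ∈ J.image φ, #{j ∈ J | φ j = x} ^ 2 := by
  rw [card_eq_sum_card_fiberwise (f := fun q ↦ φ q.1) (t := J.image φ)]
  · refine sum_congr rfl fun x _ ↦ ?_
    rw [sq, ← card_product]
    congr 1
    ext q
    simp only [mem_filter, mem_product]
    grind
  · rintro q hq
    exact mem_image_of_mem φ (mem_product.1 (mem_filter.1 hq).1).1

lemma sum_comp_pow_le {f : β → ℝ} (hf : ∀ x, 0 ≤ f x) (k : ℕ) :
    (∑ j ∈ J, f (φ j)) ^ (2 * (k + 1)) ≤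
      #J ^ (2 * k) * (#{q ∈ J ×ˢ J | φ q.1 = φ q.2} * ∑ x ∈ J.image φ, f x ^ (2 * (k + 1))) := by
  have hjensen : (∑ j ∈ J, f (φ j)) ^ (k + 1) ≤ #J ^ k * ∑ j ∈ J, f (φ j) ^ (k + 1) :=
    pow_sum_le_card_mul_sum_pow (fun j _ ↦ hf (φ j)) k
  have hcauchy : (∑ j ∈ J, f (φ j) ^ (k + 1)) ^ 2 ≤
      #{q ∈ J ×ˢ J | φ q.1 = φ q.2} * ∑ x ∈ J.image φ, f x ^ (2 * (k + 1)) := by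
    rw [card_filter_eq_eq_sum_card_fiber_sq, sum_comp (fun x ↦ f x ^ (k + 1)) φ]
    simp only [nsmul_eq_mul, Nat.cast_sum, Nat.cast_pow, mul_comm 2 (k + 1), pow_mul]
    exact sum_mul_sq_le_sq_mul_sq _ _ _
  calc (∑ j ∈ J, f (φ j)) ^ (2 * (k + 1)) = ((∑ j ∈ J, f (φ j)) ^ (k + 1)) ^ 2 := by
        rw [← pow_mul, mul_comm]
    _ ≤ (#J ^ k * ∑ j ∈ J, f (φ j) ^ (k + 1)) ^ 2 := by
        have := sum_nonneg fun j (_ : j ∈ J) ↦ hf (φ j)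
        gcongr
    _ = #J ^ (2 * k) * (∑ j ∈ J, f (φ j) ^ (k + 1)) ^ 2 := by ring
    _ ≤ _ := by gcongr

end Holder

section Shift

lemma sum_Icc_one_add {N : Type*} [AddCommMonoid N] (g : ℕ → N) (m n : ℕ) :
    ∑ i ∈ Icc 1 (m + n), g i = ∑ i ∈ Icc 1 m, g i + ∑ i ∈ Icc 1 n, g (i + m) := by
  induction n with
  | zero => simp
  | succ n ih =>
    rw [← add_assoc, sum_Icc_succ_top (by lia), sum_Icc_succ_top (by lia), ih, add_assoc]
    congr 3
    ring

lemma norm_sum_Icc_sub_sum_Icc_add_le {E : Type*} [SeminormedAddCommGroup E] {g : ℕ → E} {C : ℝ}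
    (hg : ∀ n, ‖g n‖ ≤ C) (M h : ℕ) :
    ‖∑ n ∈ Icc 1 M, g n - ∑ n ∈ Icc 1 M, g (n + h)‖ ≤ 2 * h * C := by
  have heq : ∑ n ∈ Icc 1 M, g n - ∑ n ∈ Icc 1 M, g (n + h) =
      ∑ n ∈ Icc 1 h, g n - ∑ n ∈ Icc 1 h, g (n + M) := by
    have := sum_Icc_one_add g M h
    rw [add_comm M h, sum_Icc_one_add g h M] at this
    rw [sub_eq_sub_iff_add_eq_add, ← this]
  have hnorm (k : ℕ) : ‖∑ n ∈ Icc 1 h, g (n + k)‖ ≤ h * C := by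
    simpa using norm_sum_le_of_le (Icc 1 h) fun n _ ↦ hg (n + k)
  calc _ ≤ ‖∑ n ∈ Icc 1 h, g n‖ + ‖∑ n ∈ Icc 1 h, g (n + M)‖ := heq ▸ norm_sub_le _ _
    _ ≤ 2 * h * C := by linarith [show ‖∑ n ∈ Icc 1 h, g n‖ ≤ h * C from hnorm 0, hnorm M]

end Shift

section Circle

variable {z w : ℂ}

lemma norm_pow_sub_pow_le (hz : ‖z‖ = 1) (hw : ‖w‖ = 1) (n : ℕ) :
    ‖z ^ n - w ^ n‖ ≤ n * ‖z - w‖ := by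
  induction n with
  | zero => simp
  | succ n ih =>
    calc ‖z ^ (n + 1) - w ^ (n + 1)‖ = ‖z ^ n * (z - w) + (z ^ n - w ^ n) * w‖ := by ring_nf
      _ ≤ ‖z - w‖ + ‖z ^ n - w ^ n‖ := by
        simpa [hz, hw] using norm_add_le (z ^ n * (z - w)) ((z ^ n - w ^ n) * w)
      _ ≤ (n + 1 : ℕ) * ‖z - w‖ := by push_cast; linarith

lemma norm_sub_le_abs_arg_sub_arg (hz : ‖z‖ = 1) (hw : ‖w‖ = 1) : ‖z - w‖ ≤ |z.arg - w.arg| := by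
  have hexp {u : ℂ} (hu : ‖u‖ = 1) : Complex.exp (Complex.I * u.arg) = u := by
    simpa [hu, mul_comm] using u.norm_mul_exp_arg_mul_I
  have hquot : w * Complex.exp (Complex.I * (z.arg - w.arg : ℝ)) = z := by
    rw [Complex.ofReal_sub, mul_sub, Complex.exp_sub, hexp hz, hexp hw,
      mul_div_cancel₀ _ (norm_ne_zero_iff.1 (hw ▸ one_ne_zero))]
  calc ‖z - w‖ = ‖Complex.exp (Complex.I * (z.arg - w.arg : ℝ)) - 1‖ := by
        rw [← one_mul ‖Complex.exp _ - 1‖, ← hw, ← norm_mul, mul_sub, hquot, mul_one]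
    _ ≤ |z.arg - w.arg| := Real.norm_exp_I_mul_ofReal_sub_one_le

lemma norm_sub_le_of_floor_eq (hz : ‖z‖ = 1) (hw : ‖w‖ = 1) {G : ℕ} (hG : 0 < G)
    (h : ⌊(z.arg + Real.pi) * (G / (2 * Real.pi))⌋ = ⌊(w.arg + Real.pi) * (G / (2 * Real.pi))⌋) :
    ‖z - w‖ ≤ 2 * Real.pi / G := by
  have hpos : 0 < G / (2 * Real.pi) := by positivity
  have := (Int.abs_sub_lt_one_of_floor_eq_floor h).le
  rw [← sub_mul, add_sub_add_right_eq_sub, abs_mul, abs_of_pos hpos, ← le_div_iff₀ hpos,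
    one_div_div] at this
  exact (norm_sub_le_abs_arg_sub_arg hz hw).trans this

lemma exists_subset_card_le_norm_sub_le {α : Type*} {S : Finset α} (hS : S.Nonempty) {z : α → ℂ}
    (hz : ∀ a, ‖z a‖ = 1) {G : ℕ} (hG : 0 < G) :
    ∃ T ⊆ S, #S ≤ (G + 1) * #T ∧ ∃ w : ℂ, ‖w‖ = 1 ∧ ∀ a ∈ T, ‖z a - w‖ ≤ 2 * Real.pi / G := by
  classical
  let arc (a : α) : ℤ := ⌊((z a).arg + Real.pi) * (G / (2 * Real.pi))⌋
  have harc (a : α) (_ : a ∈ S) : arc a ∈ Icc (0 : ℤ) G := by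
    have hneg := Complex.neg_pi_lt_arg (z a)
    have hle := Complex.arg_le_pi (z a)
    rw [mem_Icc]
    refine ⟨Int.floor_nonneg.2 (mul_nonneg (by linarith) (by positivity)), ?_⟩
    refine Int.cast_le.1 ((Int.floor_le _).trans (?_ : _ ≤ ((G : ℤ) : ℝ)))
    rw [mul_div_assoc', div_le_iff₀ Real.two_pi_pos]
    push_cast
    nlinarith [show (0 : ℝ) < G by positivity]
  obtain ⟨k, -, hk⟩ := exists_max_image (Icc (0 : ℤ) G) (fun k ↦ #{a ∈ S | arc a = k}) ⟨0, by simp⟩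
  have hcard : #S ≤ (G + 1) * #{a ∈ S | arc a = k} := by
    rw [card_eq_sum_card_fiberwise harc]
    simpa using sum_le_card_nsmul _ _ _ hk
  obtain ⟨a₀, ha₀⟩ : {a ∈ S | arc a = k}.Nonempty :=
    card_pos.1 (Nat.pos_of_mul_pos_left (hS.card_pos.trans_le hcard))
  exact ⟨_, filter_subset _ _, hcard, z a₀, hz a₀, fun a ha ↦ norm_sub_le_of_floor_eq (hz a) (hz a₀)
    hG ((mem_filter.1 ha).2.trans (mem_filter.1 ha₀).2.symm)⟩

end Circle

section Burgess

lemma card_mul_norm_sum_Icc_le {E : Type*} [NormedAddCommGroup E] [NormedSpace ℝ E] {g : ℕ → E}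
    (hg : ∀ n, ‖g n‖ ≤ 1) {A : Finset ℕ} {L : ℕ} (hA : ∀ a ∈ A, a ≤ L) (M B : ℕ) :
    #A * B * ‖∑ n ∈ Icc 1 M, g n‖ ≤ #A * B * (2 * (L * B)) +
      ∑ j ∈ Icc 1 M ×ˢ A, ‖∑ b ∈ Icc 1 B, g (j.1 + j.2 * b)‖ := by
  set F := ∑ n ∈ Icc 1 M, g n
  have hshift (q : ℕ × ℕ) (hq : q ∈ A ×ˢ Icc 1 B) :
      ‖F - ∑ n ∈ Icc 1 M, g (n + q.1 * q.2)‖ ≤ 2 * (L * B) := by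
    obtain ⟨ha, hb⟩ := mem_product.1 hq
    have hle : ((q.1 * q.2 : ℕ) : ℝ) ≤ L * B :=
      mod_cast Nat.mul_le_mul (hA _ ha) (mem_Icc.1 hb).2
    linarith [norm_sum_Icc_sub_sum_Icc_add_le hg M (q.1 * q.2)]
  have hsplit : (#A * B) • F =
      ∑ q ∈ A ×ˢ Icc 1 B, (F - ∑ n ∈ Icc 1 M, g (n + q.1 * q.2)) +
        ∑ j ∈ Icc 1 M ×ˢ A, ∑ b ∈ Icc 1 B, g (j.1 + j.2 * b) := by
    have hcomm : ∑ j ∈ Icc 1 M ×ˢ A, ∑ b ∈ Icc 1 B, g (j.1 + j.2 * b) =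
        ∑ q ∈ A ×ˢ Icc 1 B, ∑ n ∈ Icc 1 M, g (n + q.1 * q.2) := by
      rw [sum_product_right, sum_product]
      exact sum_congr rfl fun a _ ↦ sum_comm
    rw [hcomm, ← sum_add_distrib]
    simp
  calc #A * B * ‖F‖ = ‖(#A * B) • F‖ := by simp [RCLike.norm_nsmul ℝ]
    _ ≤ _ := hsplit ▸ norm_add_le _ _
    _ ≤ _ := by
      refine add_le_add ((norm_sum_le_of_le _ hshift).trans_eq ?_) (norm_sum_le _ _)
      simp

variable {p : ℕ} [Fact p.Prime]

lemma norm_sum_pow_mul_add_mul_le (χ : DirichletCharacter ℂ p) {z w : ℂ} (hz : ‖z‖ = 1)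
    (hw : ‖w‖ = 1) (x : ZMod p) {a : ZMod p} (ha : a ≠ 0) (B : ℕ) :
    ‖∑ b ∈ Icc 1 B, z ^ b * χ (x + a * b)‖ ≤
      ‖∑ b ∈ Icc 1 B, w ^ b * χ (x / a + b)‖ + B * (B * ‖z - w‖) := by
  have hsplit : ∑ b ∈ Icc 1 B, z ^ b * χ (x + a * b) =
      χ a * ∑ b ∈ Icc 1 B, w ^ b * χ (x / a + b) +
        ∑ b ∈ Icc 1 B, (z ^ b - w ^ b) * χ (x + a * b) := by
    rw [mul_sum, ← sum_add_distrib]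
    refine sum_congr rfl fun b _ ↦ ?_
    rw [show x + a * b = a * (x / a + b) by field_simp, map_mul]
    ring
  have herror (b : ℕ) (hb : b ∈ Icc 1 B) : ‖(z ^ b - w ^ b) * χ (x + a * b)‖ ≤ B * ‖z - w‖ :=
    calc ‖(z ^ b - w ^ b) * χ (x + a * b)‖ ≤ ‖z ^ b - w ^ b‖ := by
          rw [norm_mul]
          exact mul_le_of_le_one_right (norm_nonneg _) (χ.norm_le_one _)
      _ ≤ b * ‖z - w‖ := norm_pow_sub_pow_le hz hw b
      _ ≤ B * ‖z - w‖ := by gcongr; exact (mem_Icc.1 hb).2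
  rw [hsplit]
  refine (norm_add_le _ _).trans (add_le_add ?_ ?_)
  · rw [norm_mul]
    exact mul_le_of_le_one_left (norm_nonneg _) (χ.norm_le_one _)
  · simpa using norm_sum_le_of_le _ herror

lemma card_mul_norm_sum_pow_mul_le (χ : DirichletCharacter ℂ p) {z w : ℂ} (hz : ‖z‖ = 1)
    (hw : ‖w‖ = 1) {A : Finset ℕ} {L : ℕ} {δ : ℝ} (hAL : ∀ a ∈ A, a ≤ L)
    (hAp : ∀ a ∈ A, (a : ZMod p) ≠ 0) (hAz : ∀ a ∈ A, ‖z ^ a - w‖ ≤ δ) (M B : ℕ) :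
    #A * B * ‖∑ n ∈ Icc 1 M, z ^ n * χ n‖ ≤ #A * B * (2 * (L * B)) +
      (∑ j ∈ Icc 1 M ×ˢ A, ‖∑ b ∈ Icc 1 B, w ^ b * χ (j.1 / j.2 + b)‖ +
        M * #A * (B * (B * δ))) := by
  have hg (n : ℕ) : ‖z ^ n * χ n‖ ≤ 1 := by simpa [hz] using χ.norm_le_one n
  refine (card_mul_norm_sum_Icc_le hg hAL M B).trans (add_le_add_right ?_ _)
  have hinner (j : ℕ × ℕ) (hj : j ∈ Icc 1 M ×ˢ A) :
      ‖∑ b ∈ Icc 1 B, z ^ (j.1 + j.2 * b) * χ (j.1 + j.2 * b : ℕ)‖ ≤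
        ‖∑ b ∈ Icc 1 B, w ^ b * χ (j.1 / j.2 + b)‖ + B * (B * δ) := by
    have ha := (mem_product.1 hj).2
    have htwist : ∑ b ∈ Icc 1 B, z ^ (j.1 + j.2 * b) * χ (j.1 + j.2 * b : ℕ) =
        z ^ j.1 * ∑ b ∈ Icc 1 B, (z ^ j.2) ^ b * χ (j.1 + j.2 * b) := by
      rw [mul_sum]
      refine sum_congr rfl fun b _ ↦ ?_
      rw [pow_add, pow_mul, mul_assoc]
      push_cast
      rfl
    rw [htwist, norm_mul, norm_pow, hz, one_pow, one_mul]
    refine (norm_sum_pow_mul_add_mul_le χ (by simp [hz]) hw _ (hAp _ ha) B).trans ?_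
    gcongr
    exact hAz _ ha
  simpa [sum_add_distrib] using sum_le_sum hinner

lemma sum_norm_sum_Icc_mul_quadraticDirichletChar_pow_le {B r : ℕ} (hBp : B < p) (hr : 0 < r)
    (hBr : √p ≤ (B : ℝ) ^ r) {c : ℕ → ℂ} (hc : ∀ b, ‖c b‖ ≤ 1) :
    ∑ x : ZMod p, ‖∑ b ∈ Icc 1 B, c b * quadraticDirichletChar p (x + b)‖ ^ (2 * r) ≤
      B ^ (2 * r) * ((r ^ (2 * r) + (30 * r + 8)) * √p) := by
  have hinj : Set.InjOn (Nat.cast : ℕ → ZMod p) (Icc 1 B) := fun b hb b' hb' h ↦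
    ((ZMod.natCast_eq_natCast_iff _ _ p).1 h).eq_of_lt_of_lt
      ((mem_Icc.1 hb).2.trans_lt hBp) ((mem_Icc.1 hb').2.trans_lt hBp)
  have hsqrt : (B : ℝ) ^ r * p ≤ B ^ (2 * r) * √p :=
    calc (B : ℝ) ^ r * p = B ^ r * √p * √p := by
          rw [mul_assoc, Real.mul_self_sqrt (Nat.cast_nonneg _)]
      _ ≤ B ^ r * B ^ r * √p := by gcongr
      _ = B ^ (2 * r) * √p := by ring
  calc _ ≤ r ^ (2 * r) * (B ^ r * p) + B ^ (2 * r) * ((30 * r + 8) * √p) := by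
        simpa [mul_assoc] using sum_norm_sum_mul_quadraticDirichletChar_pow_le hinj hr hc
    _ ≤ r ^ (2 * r) * (B ^ (2 * r) * √p) + B ^ (2 * r) * ((30 * r + 8) * √p) := by gcongr
    _ = _ := by ring

lemma sum_norm_sum_mul_quadraticDirichletChar_div_add_le {A : Finset ℕ} {M X B r : ℕ}
    (hA : A ⊆ dyadicPrimes X) (hp : M * (2 * X) < p) (hBp : B < p) (hr : 0 < r)
    (hBr : √p ≤ (B : ℝ) ^ r) {s : ℝ} (hs : 0 ≤ s)
    (hsr : 2 * ((r ^ (2 * r) + (30 * r + 8)) * √p) ≤ s ^ (2 * r) * (M * #A)) {c : ℕ → ℂ}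
    (hc : ∀ b, ‖c b‖ ≤ 1) :
    ∑ j ∈ Icc 1 M ×ˢ A, ‖∑ b ∈ Icc 1 B, c b * quadraticDirichletChar p (j.1 / j.2 + b)‖ ≤
      M * #A * (B * s) := by
  let T (x : ZMod p) : ℝ := ‖∑ b ∈ Icc 1 B, c b * quadraticDirichletChar p (x + b)‖
  have hT (x : ZMod p) : 0 ≤ T x := norm_nonneg _
  set J := Icc 1 M ×ˢ A
  have hJ : (#J : ℝ) = M * #A := by simp [J]
  have henergy : (#{q ∈ J ×ˢ J | (q.1.1 : ZMod p) / q.1.2 = (q.2.1 : ZMod p) / q.2.2} : ℝ) ≤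
      2 * #J := by
    rw [hJ]
    exact_mod_cast card_filter_div_eq_div_le hA hp
  have hmoment : 2 * ∑ x, T x ^ (2 * r) ≤ (B * s) ^ (2 * r) * #J :=
    calc _ ≤ 2 * (B ^ (2 * r) * ((r ^ (2 * r) + (30 * r + 8)) * √p)) := by
          gcongr
          exact sum_norm_sum_Icc_mul_quadraticDirichletChar_pow_le hBp hr hBr hc
      _ = B ^ (2 * r) * (2 * ((r ^ (2 * r) + (30 * r + 8)) * √p)) := by ring
      _ ≤ B ^ (2 * r) * (s ^ (2 * r) * (M * #A)) := by gcongr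
      _ = _ := by rw [hJ]; ring
  rw [← hJ]
  obtain ⟨k, rfl⟩ : ∃ k, r = k + 1 := Nat.exists_eq_succ_of_ne_zero hr.ne'
  refine le_of_pow_le_pow_left₀ (n := 2 * (k + 1)) (by lia) (by positivity) ?_
  calc (∑ j ∈ J, T (j.1 / j.2)) ^ (2 * (k + 1))
      ≤ #J ^ (2 * k) * (2 * #J * ∑ x, T x ^ (2 * (k + 1))) := by
        refine (sum_comp_pow_le J (fun j ↦ (j.1 : ZMod p) / j.2) hT k).trans ?_
        gcongr
        exact subset_univ _
    _ = #J ^ (2 * k + 1) * (2 * ∑ x, T x ^ (2 * (k + 1))) := by ring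
    _ ≤ #J ^ (2 * k + 1) * ((B * s) ^ (2 * (k + 1)) * #J) := by gcongr
    _ = (#J * (B * s)) ^ (2 * (k + 1)) := by ring

lemma norm_sum_pow_mul_quadraticDirichletChar_le_of_norm_pow_sub_le {A : Finset ℕ} {M X B r : ℕ}
    (hA : A ⊆ dyadicPrimes X) (hA₀ : A.Nonempty) (hM : 0 < M) (hp : M * (2 * X) < p) (hB : 0 < B)
    (hBp : B < p) (hr : 0 < r) (hBr : √p ≤ (B : ℝ) ^ r) {s : ℝ} (hs : 0 ≤ s)
    (hsr : 2 * ((r ^ (2 * r) + (30 * r + 8)) * √p) ≤ s ^ (2 * r) * (M * #A)) {z w : ℂ}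
    (hz : ‖z‖ = 1) (hw : ‖w‖ = 1) {δ : ℝ} (hAz : ∀ a ∈ A, ‖z ^ a - w‖ ≤ δ) :
    ‖∑ n ∈ Icc 1 M, z ^ n * quadraticDirichletChar p n‖ ≤ 4 * (X * B) + M * (s + B * δ) := by
  have hAX (a : ℕ) (ha : a ∈ A) : a ≤ 2 * X := (mem_dyadicPrimes.1 (hA ha)).1.2
  have hAp (a : ℕ) (ha : a ∈ A) : (a : ZMod p) ≠ 0 :=
    natCast_ne_zero_of_mem_dyadicPrimes (by nlinarith) (hA ha)
  have haverage := card_mul_norm_sum_pow_mul_le (quadraticDirichletChar p) hz hw hAX hAp hAz M B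
  have hmean := sum_norm_sum_mul_quadraticDirichletChar_div_add_le hA hp hBp hr hBr hs hsr
    (c := fun b ↦ w ^ b) (by simp [hw])
  have hpos : (0 : ℝ) < #A * B := mod_cast Nat.mul_pos hA₀.card_pos hB
  refine le_of_mul_le_mul_left (haverage.trans ?_) hpos
  push_cast
  linarith

theorem norm_sum_pow_mul_quadraticDirichletChar_le {M X B r : ℕ} (hXB : X * B ^ 2 ≤ M)
    (hp : M * (2 * X) < p) (hr : 0 < r) (hBr : √p ≤ (B : ℝ) ^ r) (hX : (dyadicPrimes X).Nonempty)
    {s : ℝ} (hs : 0 ≤ s) (hsr : 4 * B ^ 2 * ((r ^ (2 * r) + (30 * r + 8)) * √p) ≤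
      s ^ (2 * r) * (M * #(dyadicPrimes X))) {z : ℂ} (hz : ‖z‖ = 1) :
    ‖∑ n ∈ Icc 1 M, z ^ n * quadraticDirichletChar p n‖ ≤ M * ((4 + 2 * Real.pi) / B + s) := by
  have hB : 0 < B := by
    refine Nat.pos_of_ne_zero fun hB ↦ (Real.sqrt_pos.2 (?_ : (0 : ℝ) < p)).not_ge ?_
    · exact mod_cast (Fact.out : p.Prime).pos
    · simpa [hB, hr.ne'] using hBr
  have hX₀ : 0 < X := by
    obtain ⟨a, ha⟩ := hX
    linarith [(mem_dyadicPrimes.1 ha).1]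
  have hBM : B ≤ M := by nlinarith [Nat.mul_le_mul hX₀ (Nat.le_self_pow two_ne_zero B)]
  obtain ⟨A, hA, hcard, w, hw, hAz⟩ := exists_subset_card_le_norm_sub_le hX
    (z := fun a ↦ z ^ a) (by simp [hz]) (G := B ^ 2) (by positivity)
  have hA₀ : 0 < #A := Nat.pos_of_mul_pos_left (hX.card_pos.trans_le hcard)
  have hcard' : (#(dyadicPrimes X) : ℝ) ≤ 2 * B ^ 2 * #A := by
    exact_mod_cast hcard.trans (Nat.mul_le_mul_right _ (by nlinarith : _ ≤ 2 * B ^ 2))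
  have hsr' : 2 * ((r ^ (2 * r) + (30 * r + 8)) * √p) ≤ s ^ (2 * r) * (M * #A) := by
    refine le_of_mul_le_mul_left ?_ (show (0 : ℝ) < 2 * B ^ 2 by positivity)
    calc _ = 4 * B ^ 2 * ((r ^ (2 * r) + (30 * r + 8)) * √p) := by ring
      _ ≤ s ^ (2 * r) * (M * #(dyadicPrimes X)) := hsr
      _ ≤ s ^ (2 * r) * (M * (2 * B ^ 2 * #A)) := by gcongr
      _ = _ := by ring
  have hshift : (X : ℝ) * B ≤ M / B := by
    rw [le_div_iff₀ (by positivity)]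
    exact_mod_cast (by linarith : X * B * B ≤ M)
  calc _ ≤ 4 * (X * B) + M * (s + B * (2 * Real.pi / (B ^ 2 : ℕ))) :=
        norm_sum_pow_mul_quadraticDirichletChar_le_of_norm_pow_sub_le hA (card_pos.1 hA₀)
          (by lia) hp hB (by nlinarith) hr hBr hs hsr' hz hw hAz
    _ = 4 * (X * B) + M * (s + 2 * Real.pi / B) := by push_cast; field_simp
    _ ≤ 4 * (M / B) + M * (s + 2 * Real.pi / B) := by gcongr
    _ = _ := by ring

end Burgess

section PowerSaving

lemma eventually_rpow_le_natFloor_rpow {a b : ℝ} (hab : a < b) (hb : 0 < b) :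
    ∀ᶠ x : ℝ in atTop, x ^ a ≤ ⌊x ^ b⌋₊ := by
  filter_upwards [eventually_gt_atTop 0, (tendsto_rpow_atTop hb).eventually_ge_atTop 1,
    (tendsto_rpow_atTop (sub_pos.2 hab)).eventually_ge_atTop 2] with x hx hone htwo
  have hfloor : (1 : ℝ) ≤ ⌊x ^ b⌋₊ := mod_cast (Nat.one_le_floor_iff _).2 hone
  have hmul : x ^ a * x ^ (b - a) = x ^ b := by rw [← Real.rpow_add hx]; simp
  nlinarith [Nat.lt_floor_add_one (x ^ b), Real.rpow_pos_of_pos hx a]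

lemma eventually_rpow_le_card_dyadicPrimes_natFloor {a b : ℝ} (ha : 0 ≤ a) (hab : a < b) :
    ∀ᶠ x : ℝ in atTop, x ^ a ≤ #(dyadicPrimes ⌊x ^ b⌋₊) := by
  obtain ⟨c, hac, hcb⟩ := exists_between hab
  have hc : 0 < c := ha.trans_lt hac
  have hb : 0 < b := hc.trans hcb
  have hcard := (tendsto_nat_floor_atTop.comp (tendsto_rpow_atTop hb)).eventually
    (eventually_rpow_le_card_dyadicPrimes (sub_pos.2 ((div_lt_one hc).2 hac)))
  filter_upwards [hcard, eventually_rpow_le_natFloor_rpow hcb hb, eventually_gt_atTop 0]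
    with x hcard hfloor hx
  calc x ^ a = (x ^ c) ^ (a / c) := by rw [← Real.rpow_mul hx.le, mul_div_cancel₀ _ hc.ne']
    _ ≤ (⌊x ^ b⌋₊ : ℝ) ^ (a / c) := by gcongr
    _ ≤ #(dyadicPrimes ⌊x ^ b⌋₊) := by simpa using hcard

lemma four_mul_sq_mul_sqrt_le {x B K M P κ μ g σ : ℝ} {r : ℕ} (hx : 0 < x) (hB₀ : 0 ≤ B)
    (hB : B ≤ x ^ κ) (hM : x ^ μ ≤ M) (hP : x ^ g ≤ P)
    (hK : 4 * K ≤ x ^ (μ + g - (2 * κ + 1 / 2 + 2 * r * σ))) :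
    4 * B ^ 2 * (K * √x) ≤ (x ^ (-σ)) ^ (2 * r) * (M * P) := by
  have hBsq : B ^ 2 ≤ x ^ (2 * κ) := by
    rw [mul_comm, Real.rpow_mul hx.le, Real.rpow_two]
    gcongr
  have hM₀ : 0 ≤ M := (by positivity : 0 ≤ x ^ μ).trans hM
  calc 4 * B ^ 2 * (K * √x) = 4 * K * (B ^ 2 * √x) := by ring
    _ ≤ x ^ (μ + g - (2 * κ + 1 / 2 + 2 * r * σ)) * (x ^ (2 * κ) * x ^ (1 / 2 : ℝ)) := by
        rw [Real.sqrt_eq_rpow]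
        gcongr
    _ = x ^ (-σ * (2 * r : ℕ)) * (x ^ μ * x ^ g) := by
        simp only [← Real.rpow_add hx]
        push_cast
        ring_nf
    _ ≤ (x ^ (-σ)) ^ (2 * r) * (M * P) := by
        rw [Real.rpow_mul_natCast hx.le]
        gcongr

lemma div_add_rpow_neg_le {x B c σ : ℝ} (hx : 0 < x) (hc : 0 ≤ c) (hB : x ^ σ ≤ B)
    (hcx : c + 1 ≤ x ^ (σ / 2)) : c / B + x ^ (-σ) ≤ x ^ (-(σ / 2)) :=
  calc c / B + x ^ (-σ) ≤ c / x ^ σ + x ^ (-σ) := by gcongr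
    _ = (c + 1) * x ^ (-σ) := by rw [Real.rpow_neg hx.le]; ring
    _ ≤ x ^ (σ / 2) * x ^ (-σ) := by gcongr
    _ = x ^ (-(σ / 2)) := by rw [← Real.rpow_add hx]; ring_nf

lemma norm_sum_pow_mul_quadraticDirichletChar_le_mul_rpow {p : ℕ} [Fact p.Prime]
    {μ ν γ κ σ b g : ℝ} {M X B r : ℕ} (hr : 0 < r) (hγμ : γ + 2 * κ ≤ μ) (hrb : 1 / 2 ≤ b * r)
    (hσb : σ ≤ b) (hM : (p : ℝ) ^ μ ≤ M) (hMν : (M : ℝ) ≤ (p : ℝ) ^ ν) (hB : (p : ℝ) ^ b ≤ B)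
    (hBκ : (B : ℝ) ≤ (p : ℝ) ^ κ) (hX : (p : ℝ) ^ g ≤ #(dyadicPrimes X))
    (hXγ : (X : ℝ) ≤ (p : ℝ) ^ γ) (hpν : 2 < (p : ℝ) ^ (1 - (ν + γ)))
    (hpμ : 4 * (r ^ (2 * r) + (30 * r + 8)) ≤ (p : ℝ) ^ (μ + g - (2 * κ + 1 / 2 + 2 * r * σ)))
    (hpσ : 4 + 2 * Real.pi + 1 ≤ (p : ℝ) ^ (σ / 2)) {z : ℂ} (hz : ‖z‖ = 1) :
    ‖∑ n ∈ Icc 1 M, z ^ n * quadraticDirichletChar p n‖ ≤ M * (p : ℝ) ^ (-(σ / 2)) := by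
  have hp : (1 : ℝ) ≤ p := mod_cast (Fact.out : p.Prime).one_le
  have hp₀ : (0 : ℝ) < p := zero_lt_one.trans_le hp
  have hXB : (X * B ^ 2 : ℝ) ≤ M :=
    calc (X * B ^ 2 : ℝ) ≤ p ^ γ * (p ^ κ) ^ (2 : ℝ) := by
          rw [Real.rpow_two]
          gcongr
      _ = p ^ (γ + 2 * κ) := by rw [← Real.rpow_mul hp₀.le, ← Real.rpow_add hp₀, mul_comm κ]
      _ ≤ p ^ μ := by gcongr
      _ ≤ M := hM
  have hMX : (M * (2 * X) : ℝ) < p :=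
    calc (M * (2 * X) : ℝ) ≤ p ^ ν * (2 * p ^ γ) := by gcongr
      _ = 2 * p ^ (ν + γ) := by rw [Real.rpow_add hp₀]; ring
      _ < p ^ (1 - (ν + γ)) * p ^ (ν + γ) := by gcongr
      _ = p := by rw [← Real.rpow_add hp₀]; simp
  have hBr : √p ≤ (B : ℝ) ^ r :=
    calc √p = (p : ℝ) ^ (1 / 2 : ℝ) := Real.sqrt_eq_rpow _
      _ ≤ p ^ (b * r) := by gcongr
      _ = (p ^ b) ^ r := Real.rpow_mul_natCast hp₀.le _ _
      _ ≤ B ^ r := by gcongr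
  have hX₀ : (dyadicPrimes X).Nonempty := by
    rw [← card_pos, ← Nat.cast_pos (α := ℝ)]
    exact (by positivity : 0 < (p : ℝ) ^ g).trans_le hX
  refine (norm_sum_pow_mul_quadraticDirichletChar_le (mod_cast hXB) (mod_cast hMX) hr hBr hX₀
    (by positivity) (four_mul_sq_mul_sqrt_le hp₀ (by positivity) hBκ hM hX hpμ) hz).trans ?_
  gcongr
  exact div_add_rpow_neg_le hp₀ (by positivity) ((by gcongr : _ ≤ _).trans hB) hpσ

lemma eventually_norm_sum_pow_mul_quadraticDirichletChar_le {μ ν γ κ σ : ℝ} {r : ℕ} (hγ : 0 < γ)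
    (hκ : 0 < κ) (hσ : 0 < σ) (hσκ : σ < κ) (hγμ : γ + 2 * κ ≤ μ) (hγν : ν + γ < 1)
    (hr : 1 / 2 < r * κ) (hμ : 2 * κ + 1 / 2 + 2 * r * σ < μ + γ) :
    ∀ᶠ p : ℕ in atTop, ∀ [Fact p.Prime] {M : ℕ}, (p : ℝ) ^ μ ≤ M → (M : ℝ) ≤ (p : ℝ) ^ ν →
      ∀ {z : ℂ}, ‖z‖ = 1 → ‖∑ n ∈ Icc 1 M, z ^ n * quadraticDirichletChar p n‖ ≤
        M * (p : ℝ) ^ (-(σ / 2)) := by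
  have hr₀ : (0 : ℝ) < r := pos_of_mul_pos_left (one_half_pos.trans hr) hκ.le
  obtain ⟨g, hg, hgγ⟩ : ∃ g, max 0 (2 * κ + 1 / 2 + 2 * r * σ - μ) < g ∧ g < γ :=
    exists_between (max_lt hγ (by linarith))
  obtain ⟨hg₀, hgμ⟩ := max_lt_iff.1 hg
  obtain ⟨b, hb, hbκ⟩ : ∃ b, max σ (1 / 2 / r) < b ∧ b < κ :=
    exists_between (max_lt hσκ ((div_lt_iff₀' hr₀).2 hr))
  obtain ⟨hσb, hrb⟩ := max_lt_iff.1 hb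
  rw [sub_lt_iff_lt_add'] at hgμ
  rw [div_lt_iff₀ hr₀] at hrb
  filter_upwards [tendsto_natCast_atTop_atTop.eventually (eventually_rpow_le_natFloor_rpow hbκ hκ),
    tendsto_natCast_atTop_atTop.eventually
      (eventually_rpow_le_card_dyadicPrimes_natFloor hg₀.le hgγ),
    tendsto_natCast_atTop_atTop.eventually
      ((tendsto_rpow_atTop (sub_pos.2 hγν)).eventually_gt_atTop 2),
    tendsto_natCast_atTop_atTop.eventually
      ((tendsto_rpow_atTop (sub_pos.2 hgμ)).eventually_ge_atTop _),
    tendsto_natCast_atTop_atTop.eventually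
      ((tendsto_rpow_atTop (half_pos hσ)).eventually_ge_atTop _)]
    with p hB hX hpν hpμ hpσ _ M hM hMν z hz
  exact norm_sum_pow_mul_quadraticDirichletChar_le_mul_rpow (Nat.cast_pos.1 hr₀) hγμ hrb.le hσb.le
    hM hMν hB (Nat.floor_le (by positivity)) hX (Nat.floor_le (by positivity)) hpν hpμ hpσ hz

theorem exists_eventually_norm_sum_pow_mul_quadraticDirichletChar_le {μ ν : ℝ} (hμ : 1 / 4 < μ)
    (hν : ν < 1) (hμν : ν < μ + 1 / 2) :
    ∃ δ : ℝ, 0 < δ ∧ ∀ᶠ p : ℕ in atTop, ∀ [Fact p.Prime] {M : ℕ},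
      (p : ℝ) ^ μ ≤ M → (M : ℝ) ≤ (p : ℝ) ^ ν → ∀ {z : ℂ}, ‖z‖ = 1 →
        ‖∑ n ∈ Icc 1 M, z ^ n * quadraticDirichletChar p n‖ ≤ M * (p : ℝ) ^ (-δ) := by
  obtain ⟨γ, hlow, hup⟩ : ∃ γ, max 0 (1 / 2 - μ) < γ ∧ γ < min (1 - ν) μ :=
    exists_between (by grind)
  obtain ⟨hγ, hγμ⟩ := max_lt_iff.1 hlow
  obtain ⟨hγν, hγμ'⟩ := lt_min_iff.1 hup
  obtain ⟨κ, hκ, hκup⟩ : ∃ κ, 0 < κ ∧ κ < min ((μ - γ) / 2) ((μ + γ - 1 / 2) / 2) :=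
    exists_between (by grind)
  obtain ⟨r, hr⟩ := exists_nat_gt (1 / 2 / κ)
  have hr₀ : (0 : ℝ) < r := (by positivity : 0 < 1 / 2 / κ).trans hr
  obtain ⟨σ, hσ, hσup⟩ : ∃ σ, 0 < σ ∧ σ < min κ ((μ + γ - 1 / 2 - 2 * κ) / (2 * r)) :=
    exists_between (lt_min hκ (div_pos (by grind) (by positivity)))
  obtain ⟨hσκ, hσr⟩ := lt_min_iff.1 hσup
  rw [lt_div_iff₀' (by positivity)] at hσr
  exact ⟨σ / 2, half_pos hσ, eventually_norm_sum_pow_mul_quadraticDirichletChar_le hγ hκ hσ hσκ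
    (by grind) (by grind) ((div_lt_iff₀ hκ).1 hr) (by grind)⟩

end PowerSaving

section SumsInSumset

section AddCommGroup

variable {G : Type*} [AddCommGroup G] [Fintype G]

lemma sum_norm_sq_sum_addChar_neg (A : Finset G) :
    ∑ ψ : AddChar G ℂ, ‖∑ a ∈ A, ψ (-a)‖ ^ 2 = Fintype.card G * #A := by
  classical
  have hsq (ψ : AddChar G ℂ) :
      (‖∑ a ∈ A, ψ (-a)‖ : ℂ) ^ 2 = ∑ a ∈ A, ∑ b ∈ A, ψ (a - b) := by
    simp_rw [← Complex.conj_mul', map_sum, sum_mul_sum, ← AddChar.map_neg_eq_conj, neg_neg,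
      ← AddChar.map_add_eq_mul, ← sub_eq_add_neg]
  have hsum : ∑ ψ : AddChar G ℂ, (‖∑ a ∈ A, ψ (-a)‖ : ℂ) ^ 2 = Fintype.card G * #A :=
    calc _ = ∑ a ∈ A, ∑ b ∈ A, ∑ ψ : AddChar G ℂ, ψ (a - b) := by
          simp_rw [hsq]
          rw [sum_comm]
          simp_rw [sum_comm (s := univ)]
      _ = ∑ a ∈ A, ∑ b ∈ A, if a = b then (Fintype.card G : ℂ) else 0 := by
          simp_rw [AddChar.sum_apply_eq_ite, sub_eq_zero]
      _ = Fintype.card G * #A := by simp [mul_comm]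
  exact_mod_cast hsum

lemma sum_addChar_mul_sum_addChar_neg_sq (f : G → ℂ) (A : Finset G) :
    ∑ ψ : AddChar G ℂ, (∑ x, ψ x * f x) * (∑ a ∈ A, ψ (-a)) ^ 2 =
      Fintype.card G * ∑ a ∈ A, ∑ b ∈ A, f (a + b) := by
  classical
  have hexpand (ψ : AddChar G ℂ) : (∑ x, ψ x * f x) * (∑ a ∈ A, ψ (-a)) ^ 2 =
      ∑ a ∈ A, ∑ b ∈ A, ∑ x, f x * ψ (x - (a + b)) := by
    rw [sq, sum_mul_sum, mul_comm, sum_mul]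
    refine sum_congr rfl fun a _ ↦ ?_
    rw [sum_mul]
    refine sum_congr rfl fun b _ ↦ ?_
    rw [mul_sum]
    refine sum_congr rfl fun x _ ↦ ?_
    rw [sub_eq_add_neg, neg_add, AddChar.map_add_eq_mul, AddChar.map_add_eq_mul]
    ring
  calc _ = ∑ a ∈ A, ∑ b ∈ A, ∑ x, f x * ∑ ψ : AddChar G ℂ, ψ (x - (a + b)) := by
        simp_rw [hexpand, mul_sum]
        rw [sum_comm]
        simp_rw [sum_comm (s := (univ : Finset (AddChar G ℂ)))]
    _ = Fintype.card G * ∑ a ∈ A, ∑ b ∈ A, f (a + b) := by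
        simp [AddChar.sum_apply_eq_ite, sub_eq_zero, mul_sum, mul_comm]

lemma card_le_of_norm_sum_addChar_mul_le {f : G → ℂ} {A : Finset G} {K : ℝ}
    (hf : ∀ a ∈ A, ∀ b ∈ A, f (a + b) = 1) (hK : ∀ ψ : AddChar G ℂ, ‖∑ x, ψ x * f x‖ ≤ K) :
    #A ≤ K := by
  have hdouble : ∑ a ∈ A, ∑ b ∈ A, f (a + b) = #A * #A := by
    rw [sum_congr rfl fun a ha ↦ sum_congr rfl (hf a ha)]
    simp
  have hle : (Fintype.card G * #A : ℝ) * #A ≤ (Fintype.card G * #A) * K :=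
    calc (Fintype.card G * #A : ℝ) * #A
        = ‖∑ ψ : AddChar G ℂ, (∑ x, ψ x * f x) * (∑ a ∈ A, ψ (-a)) ^ 2‖ := by
          rw [sum_addChar_mul_sum_addChar_neg_sq, hdouble]
          simp [mul_assoc]
      _ ≤ ∑ ψ : AddChar G ℂ, K * ‖∑ a ∈ A, ψ (-a)‖ ^ 2 := by
          refine norm_sum_le_of_le _ fun ψ _ ↦ ?_
          rw [norm_mul, norm_pow]
          gcongr
          exact hK ψ
      _ = (Fintype.card G * #A) * K := by rw [← mul_sum, sum_norm_sq_sum_addChar_neg, mul_comm]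
  rcases A.eq_empty_or_nonempty with rfl | hA
  · simpa using (norm_nonneg _).trans (hK 0)
  · exact le_of_mul_le_mul_left hle
      (mul_pos (Nat.cast_pos.2 Fintype.card_pos) (Nat.cast_pos.2 hA.card_pos))

end AddCommGroup

lemma sum_zmod_eq_sum_range {α : Type*} [AddCommMonoid α] (N : ℕ) [NeZero N] (g : ℕ → α) :
    ∑ x : ZMod N, g x.val = ∑ n ∈ range N, g n := by
  obtain ⟨k, rfl⟩ := Nat.exists_eq_succ_of_ne_zero (NeZero.ne N)
  exact Fin.sum_univ_eq_sum_range g (k + 1)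

lemma card_le_of_norm_sum_range_pow_mul_le {f : ℕ → ℂ} {N : ℕ} {A : Finset ℕ} {K : ℝ}
    (hA : ∀ a ∈ A, ∀ b ∈ A, a + b < N) (hf : ∀ a ∈ A, ∀ b ∈ A, f (a + b) = 1)
    (hK : ∀ z : ℂ, ‖z‖ = 1 → ‖∑ n ∈ range N, z ^ n * f n‖ ≤ K) : #A ≤ K := by
  rcases A.eq_empty_or_nonempty with rfl | ⟨a₀, ha₀⟩
  · simpa using (norm_nonneg _).trans (hK 1 norm_one)
  have : NeZero N := ⟨(Nat.zero_le _).trans_lt (hA a₀ ha₀ a₀ ha₀) |>.ne'⟩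
  have hinj : Set.InjOn (Nat.cast : ℕ → ZMod N) A := fun a ha b hb hab ↦ by
    have hlt : ∀ c ∈ A, c < N := fun c hc ↦ (Nat.le_add_right c c).trans_lt (hA c hc c hc)
    rwa [ZMod.natCast_eq_natCast_iff', Nat.mod_eq_of_lt (hlt a ha), Nat.mod_eq_of_lt (hlt b hb)]
      at hab
  rw [← card_image_of_injOn hinj]
  refine card_le_of_norm_sum_addChar_mul_le (f := fun x ↦ f x.val) ?_ fun ψ ↦ ?_
  · simp only [forall_mem_image]
    intro a ha b hb
    rw [← Nat.cast_add, ZMod.val_cast_of_lt (hA a ha b hb), hf a ha b hb]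
  · have hpow (x : ZMod N) : ψ x = ψ 1 ^ x.val := by
      rw [← AddChar.map_nsmul_eq_pow, nsmul_one, ZMod.natCast_zmod_val]
    rw [sum_congr rfl fun x _ ↦ by rw [hpow x], sum_zmod_eq_sum_range N fun n ↦ ψ 1 ^ n * f n]
    exact hK _ (AddChar.norm_apply ψ 1)

end SumsInSumset

section SumsOfProducts

lemma sq_card_le_two_mul_card_image_mul {P : Finset ℕ} (hP : ∀ q ∈ P, q.Prime) :
    #P ^ 2 ≤ 2 * #((P ×ˢ P).image fun q ↦ q.1 * q.2) := by
  rw [sq, ← card_product]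
  refine card_le_mul_card_image _ 2 fun m hm ↦ ?_
  obtain ⟨⟨a, b⟩, hab, rfl⟩ := mem_image.1 hm
  obtain ⟨ha, hb⟩ := mem_product.1 hab
  refine (card_le_card (t := {(a, b), (b, a)}) fun ⟨c, d⟩ hcd ↦ ?_).trans card_le_two
  obtain ⟨hcd, heq : c * d = a * b⟩ := mem_filter.1 hcd
  have hc : c.Prime := hP c (mem_product.1 hcd).1
  rcases hc.dvd_mul.1 (Dvd.intro d heq) with hca | hcb
  · obtain rfl := (Nat.prime_dvd_prime_iff_eq hc (hP a ha)).1 hca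
    simp [Nat.eq_of_mul_eq_mul_left hc.pos heq]
  · obtain rfl := (Nat.prime_dvd_prime_iff_eq hc (hP b hb)).1 hcb
    simp [Nat.eq_of_mul_eq_mul_left hc.pos (heq.trans (mul_comm a c))]

lemma quadraticDirichletChar_eq_one_of_not_isQuadNonRes {p : ℕ} [Fact p.Prime] {x : ℕ} (hx : 0 < x)
    (hxp : x < p) (h : ¬IsQuadNonRes p x) : quadraticDirichletChar p x = 1 := by
  have hdvd : ¬p ∣ x := Nat.not_dvd_of_pos_of_lt hx hxp
  obtain ⟨y, hy⟩ : ∃ y : ℤ, y ^ 2 ≡ x [ZMOD p] := by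
    simpa [IsQuadNonRes, Int.natCast_dvd_natCast, hdvd] using h
  have hsq : IsSquare (x : ZMod p) := by
    refine ⟨y, ?_⟩
    rw [← sq]
    exact_mod_cast ((ZMod.intCast_eq_intCast_iff _ _ p).2 hy).symm
  have hone : quadraticChar (ZMod p) x = 1 :=
    (quadraticChar_one_iff_isSquare (by rwa [Ne, ZMod.natCast_eq_zero_iff])).2 hsq
  simp [quadraticDirichletChar, hone]

lemma exists_isQuadNonRes_mul_add_mul {p : ℕ} [Fact p.Prime] {n M : ℕ} {K : ℝ}
    (hnM : 8 * n ^ 2 ≤ M) (hMp : M < p)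
    (hK : ∀ {z : ℂ}, ‖z‖ = 1 → ‖∑ m ∈ Icc 1 M, z ^ m * quadraticDirichletChar p m‖ ≤ K)
    (hP : 2 * K < (#(dyadicPrimes n) : ℝ) ^ 2) :
    ∃ p₁ ∈ dyadicPrimes n, ∃ p₂ ∈ dyadicPrimes n, ∃ p₃ ∈ dyadicPrimes n, ∃ p₄ ∈ dyadicPrimes n,
      IsQuadNonRes p ((p₁ : ℤ) * p₂ + (p₃ : ℤ) * p₄) := by
  by_contra! hres
  set A := (dyadicPrimes n ×ˢ dyadicPrimes n).image fun q ↦ q.1 * q.2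
  have hA : ∀ a ∈ A, 0 < a ∧ a ≤ 4 * n ^ 2 := by
    simp only [A, forall_mem_image, mem_product, mem_dyadicPrimes]
    rintro ⟨b, c⟩ ⟨⟨⟨-, hbn⟩, hb⟩, ⟨-, hcn⟩, hc⟩
    exact ⟨Nat.mul_pos hb.pos hc.pos, (Nat.mul_le_mul hbn hcn).trans_eq (by ring)⟩
  have hone : ∀ a ∈ A, ∀ b ∈ A, quadraticDirichletChar p ((a + b : ℕ) : ZMod p) = 1 := by
    intro a ha b hb
    refine quadraticDirichletChar_eq_one_of_not_isQuadNonRes (by grind) (by grind) ?_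
    obtain ⟨⟨p₁, p₂⟩, h₁₂, rfl⟩ := mem_image.1 ha
    obtain ⟨⟨p₃, p₄⟩, h₃₄, rfl⟩ := mem_image.1 hb
    obtain ⟨h₁, h₂⟩ := mem_product.1 h₁₂
    obtain ⟨h₃, h₄⟩ := mem_product.1 h₃₄
    exact_mod_cast hres p₁ h₁ p₂ h₂ p₃ h₃ p₄ h₄
  have hcardA : (#A : ℝ) ≤ K := by
    refine card_le_of_norm_sum_range_pow_mul_le (f := fun m ↦ quadraticDirichletChar p m)
      (N := M + 1) (by grind) hone fun z hz ↦ ?_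
    rw [range_eq_Ico, sum_eq_sum_Ico_succ_bot (Nat.succ_pos _)]
    simpa [MulChar.map_zero, Ico_add_one_right_eq_Icc] using hK hz
  have hcard : (#(dyadicPrimes n) : ℝ) ^ 2 ≤ 2 * #A :=
    mod_cast sq_card_le_two_mul_card_image_mul fun q hq ↦ (mem_dyadicPrimes.1 hq).2
  linarith

end SumsOfProducts

lemma mem_dyadicPrimes_natFloor {x : ℝ} {q : ℕ} (hx : 0 ≤ x) (hq : q ∈ dyadicPrimes ⌊x⌋₊) :
    x < q ∧ (q : ℝ) ≤ 2 * x := by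
  obtain ⟨⟨hxq, hqx⟩, -⟩ := mem_dyadicPrimes.1 hq
  have hqx' : (q : ℝ) ≤ 2 * ⌊x⌋₊ := mod_cast hqx
  exact ⟨(Nat.floor_lt hx).1 hxq, hqx'.trans (by gcongr; exact Nat.floor_le hx)⟩

lemma natFloor_rpow_sq_le {x : ℝ} (hx : 0 ≤ x) (θ : ℝ) : (⌊x ^ θ⌋₊ : ℝ) ^ 2 ≤ x ^ (2 * θ) := by
  rw [mul_comm, Real.rpow_mul hx, Real.rpow_two]
  gcongr
  exact Nat.floor_le (by positivity)

lemma eventually_mul_natFloor_rpow_sq_mem_Icc {μ θ ν c : ℝ} (hθ : 0 < θ) (hμ : μ < 2 * θ)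
    (hν : 2 * θ < ν) (hc : 1 ≤ c) :
    ∀ᶠ x : ℝ in atTop, c * (⌊x ^ θ⌋₊ : ℝ) ^ 2 ∈ Set.Icc (x ^ μ) (x ^ ν) := by
  filter_upwards [eventually_rpow_le_natFloor_rpow (by linarith : μ / 2 < θ) hθ,
    (tendsto_rpow_atTop (sub_pos.2 hν)).eventually_ge_atTop c, eventually_gt_atTop 0]
    with x hfloor hgap hx
  constructor
  · calc x ^ μ = (x ^ (μ / 2)) ^ 2 := by rw [← Real.rpow_mul_natCast hx.le]; norm_num
      _ ≤ (⌊x ^ θ⌋₊ : ℝ) ^ 2 := by gcongr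
      _ ≤ c * (⌊x ^ θ⌋₊ : ℝ) ^ 2 := le_mul_of_one_le_left (by positivity) hc
  · calc c * (⌊x ^ θ⌋₊ : ℝ) ^ 2 ≤ x ^ (ν - 2 * θ) * x ^ (2 * θ) := by
          gcongr
          exact natFloor_rpow_sq_le hx.le θ
      _ = x ^ ν := by rw [← Real.rpow_add hx, sub_add_cancel]

lemma eventually_mul_natFloor_rpow_sq_mul_rpow_neg_lt_card_sq {θ δ : ℝ} (hθ : 0 < θ) (hδ : 0 < δ)
    (c : ℝ) : ∀ᶠ x : ℝ in atTop,
      c * (⌊x ^ θ⌋₊ : ℝ) ^ 2 * x ^ (-δ) < (#(dyadicPrimes ⌊x ^ θ⌋₊) : ℝ) ^ 2 := by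
  obtain ⟨a, ha, haθ⟩ : ∃ a, max 0 (θ - δ / 2) < a ∧ a < θ :=
    exists_between (max_lt hθ (by linarith))
  obtain ⟨ha₀, haδ⟩ := max_lt_iff.1 ha
  have hgap : 0 < 2 * a - (2 * θ - δ) := by linarith
  filter_upwards [eventually_rpow_le_card_dyadicPrimes_natFloor ha₀.le haθ,
    (tendsto_rpow_atTop hgap).eventually_gt_atTop (max c 0), eventually_gt_atTop 0]
    with x hcard hgap hx
  calc c * (⌊x ^ θ⌋₊ : ℝ) ^ 2 * x ^ (-δ) ≤ max c 0 * x ^ (2 * θ) * x ^ (-δ) := by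
        gcongr
        exacts [le_max_left c 0, natFloor_rpow_sq_le hx.le θ]
    _ < x ^ (2 * a - (2 * θ - δ)) * x ^ (2 * θ) * x ^ (-δ) := by gcongr
    _ = (x ^ a) ^ 2 := by
        rw [← Real.rpow_add hx, ← Real.rpow_add hx, ← Real.rpow_mul_natCast hx.le]
        push_cast
        ring_nf
    _ ≤ (#(dyadicPrimes ⌊x ^ θ⌋₊) : ℝ) ^ 2 := by gcongr

lemma eventually_exists_isQuadNonRes_mul_add_mul {θ : ℝ} (hθ : 1 / 8 < θ) (hθ' : θ < 1 / 2) :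
    ∀ᶠ p : ℕ in atTop, p.Prime →
      ∃ p₁ ∈ dyadicPrimes ⌊(p : ℝ) ^ θ⌋₊, ∃ p₂ ∈ dyadicPrimes ⌊(p : ℝ) ^ θ⌋₊,
      ∃ p₃ ∈ dyadicPrimes ⌊(p : ℝ) ^ θ⌋₊, ∃ p₄ ∈ dyadicPrimes ⌊(p : ℝ) ^ θ⌋₊,
        IsQuadNonRes p ((p₁ : ℤ) * p₂ + (p₃ : ℤ) * p₄) := by
  obtain ⟨δ, hδ, hsum⟩ := exists_eventually_norm_sum_pow_mul_quadraticDirichletChar_le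
    (μ := θ + 1 / 8) (ν := θ + 1 / 2) (by linarith) (by linarith) (by linarith)
  filter_upwards [hsum,
    tendsto_natCast_atTop_atTop.eventually (eventually_mul_natFloor_rpow_sq_mem_Icc
      (μ := θ + 1 / 8) (θ := θ) (ν := θ + 1 / 2) (c := 8) (by linarith) (by linarith) (by linarith)
      (by norm_num)),
    tendsto_natCast_atTop_atTop.eventually
      (eventually_mul_natFloor_rpow_sq_mul_rpow_neg_lt_card_sq (by linarith : 0 < θ) hδ 16)]
    with p hsum hM hcard hp
  have : Fact p.Prime := ⟨hp⟩
  set n := ⌊(p : ℝ) ^ θ⌋₊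
  obtain ⟨hMlow, hMup⟩ : ((8 * n ^ 2 : ℕ) : ℝ) ∈ Set.Icc _ _ := mod_cast hM
  have hMp : ((8 * n ^ 2 : ℕ) : ℝ) < p := hMup.trans_lt <|
    (Real.rpow_lt_rpow_of_exponent_lt (mod_cast hp.one_lt) (by linarith)).trans_eq (Real.rpow_one _)
  refine exists_isQuadNonRes_mul_add_mul le_rfl (mod_cast hMp) (hsum hMlow hMup)
    (hcard.trans_eq' ?_)
  push_cast
  ring

theorem primes_products_sum_nonresidue_general (η : ℝ) (hη : 0 < η) (hη' : η < 3 / 8) :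
    ∃ p₀ : ℕ, ∀ (p : ℕ), p.Prime → p₀ ≤ p →
      ∃ p₁ p₂ p₃ p₄ : ℕ, p₁.Prime ∧ p₂.Prime ∧ p₃.Prime ∧ p₄.Prime ∧
        (p : ℝ) ^ ((1 : ℝ) / 8 + η) < (p₁ : ℝ) ∧ (p₁ : ℝ) ≤ 2 * (p : ℝ) ^ ((1 : ℝ) / 8 + η) ∧
        (p : ℝ) ^ ((1 : ℝ) / 8 + η) < (p₂ : ℝ) ∧ (p₂ : ℝ) ≤ 2 * (p : ℝ) ^ ((1 : ℝ) / 8 + η) ∧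
        (p : ℝ) ^ ((1 : ℝ) / 8 + η) < (p₃ : ℝ) ∧ (p₃ : ℝ) ≤ 2 * (p : ℝ) ^ ((1 : ℝ) / 8 + η) ∧
        (p : ℝ) ^ ((1 : ℝ) / 8 + η) < (p₄ : ℝ) ∧ (p₄ : ℝ) ≤ 2 * (p : ℝ) ^ ((1 : ℝ) / 8 + η) ∧
        IsQuadNonRes p ((p₁ : ℤ) * p₂ + (p₃ : ℤ) * p₄) := by
  obtain ⟨p₀, hp₀⟩ := eventually_atTop.1
    (eventually_exists_isQuadNonRes_mul_add_mul (θ := 1 / 8 + η) (by linarith) (by linarith))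
  refine ⟨p₀, fun p hp hpp₀ ↦ ?_⟩
  obtain ⟨p₁, h₁, p₂, h₂, p₃, h₃, p₄, h₄, hnonres⟩ := hp₀ p hpp₀ hp
  have hprime {q : ℕ} (hq : q ∈ dyadicPrimes ⌊(p : ℝ) ^ (1 / 8 + η)⌋₊) : q.Prime :=
    (mem_dyadicPrimes.1 hq).2
  have hsize {q : ℕ} (hq : q ∈ dyadicPrimes ⌊(p : ℝ) ^ (1 / 8 + η)⌋₊) :
      (p : ℝ) ^ (1 / 8 + η) < q ∧ (q : ℝ) ≤ 2 * (p : ℝ) ^ (1 / 8 + η) :=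
    mem_dyadicPrimes_natFloor (by positivity) hq
  exact ⟨p₁, p₂, p₃, p₄, hprime h₁, hprime h₂, hprime h₃, hprime h₄, (hsize h₁).1, (hsize h₁).2,
    (hsize h₂).1, (hsize h₂).2, (hsize h₃).1, (hsize h₃).2, (hsize h₄).1, (hsize h₄).2, hnonres⟩

/-- Corollary 2.13: for large primes `p` there are primes
`p₁, p₂, p₃, p₄ ∼ p^{1/8+η}` with `p₁·p₂ + p₃·p₄` a quadratic non-residue mod `p`. -/
theorem primes_products_sum_nonresidue (η : ℝ) (hη : 0 < η) (hη' : η < 1 / 20) :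
    ∃ p₀ : ℕ, ∀ (p : ℕ), p.Prime → p₀ ≤ p →
      ∃ p₁ p₂ p₃ p₄ : ℕ, p₁.Prime ∧ p₂.Prime ∧ p₃.Prime ∧ p₄.Prime ∧
        (p : ℝ) ^ ((1 : ℝ) / 8 + η) < (p₁ : ℝ) ∧ (p₁ : ℝ) ≤ 2 * (p : ℝ) ^ ((1 : ℝ) / 8 + η) ∧
        (p : ℝ) ^ ((1 : ℝ) / 8 + η) < (p₂ : ℝ) ∧ (p₂ : ℝ) ≤ 2 * (p : ℝ) ^ ((1 : ℝ) / 8 + η) ∧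
        (p : ℝ) ^ ((1 : ℝ) / 8 + η) < (p₃ : ℝ) ∧ (p₃ : ℝ) ≤ 2 * (p : ℝ) ^ ((1 : ℝ) / 8 + η) ∧
        (p : ℝ) ^ ((1 : ℝ) / 8 + η) < (p₄ : ℝ) ∧ (p₄ : ℝ) ≤ 2 * (p : ℝ) ^ ((1 : ℝ) / 8 + η) ∧
        IsQuadNonRes p ((p₁ : ℤ) * p₂ + (p₃ : ℤ) * p₄) :=
  primes_products_sum_nonresidue_general η hη (hη'.trans (by norm_num))
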